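/- arXiv:2012.01492 — 2 statements merged into one kernel-verified Lean document; each statement's English description precedes it below -/
import Mathlib

section
/- For all constants K ≥ 1 and c > 0 there exist constants C > 0 and δ > 0 with the following property. Let n ≥ 1 and let 𝐝 = (d_1,…,d_n) be a degree sequence with even sum M = Σ_i d_i and maximum entry Δ satisfying Δ² ≤ δM. Let H₁ and H₂ be edge-disjoint graphs on [n] with 𝐝^{H₁} ⪯ 𝐝 componentwise and with maximum degree Δ_{H₂} ≤ KΔ, and suppose M − 2|H₁| ≥ cM. Let u ≠ v with uv ∉ H₁ ∪ H₂, and suppose the set of graphs with degree sequence 𝐝 containing H₁ and avoiding all edges of H₂ is nonempty. Then P(uv ∈ 𝒢(n,𝐝) | H₁⁺, H₂⁻) = (1 + θ)·(d_u − d_u^{H₁})(d_v − d_v^{H₁})/(M − 2|H₁|) for some real θ with |θ| ≤ C·Δ²/M. -/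
open Filter

noncomputable section

/-- The degree of the vertex `v` in the simple graph `G` on `[n]`. -/
def deg {n : ℕ} (G : SimpleGraph (Fin n)) (v : Fin n) : ℕ := (G.neighborSet v).ncard

/-- The number of edges of `G`. -/
def nedges {n : ℕ} (G : SimpleGraph (Fin n)) : ℕ := G.edgeSet.ncard

/-- The maximum degree of `G`. -/
def maxDeg {n : ℕ} (G : SimpleGraph (Fin n)) : ℕ := Finset.univ.sup (deg G)

/-- The probability that a graph chosen uniformly at random among all simple graphs on `[n]`
satisfying `base` also satisfies `Q`. -/
def prob {n : ℕ} (base Q : SimpleGraph (Fin n) → Prop) : ℝ :=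
  (Nat.card {G : SimpleGraph (Fin n) // base G ∧ Q G} : ℝ) /
    (Nat.card {G : SimpleGraph (Fin n) // base G} : ℝ)

section Switching

open scoped Classical symmDiff

variable {n : ℕ}

/-- The 4-cycle with vertices `u, v, y, x` in this cyclic order. -/
def fourCycle (u v x y : Fin n) : SimpleGraph (Fin n) :=
  SimpleGraph.fromEdgeSet {s(u, v), s(x, y), s(u, x), s(v, y)}

/-- The graphs with degree sequence `d` that contain `H₁` and avoid `H₂`. -/
def realizations (d : Fin n → ℕ) (H₁ H₂ : SimpleGraph (Fin n)) :
    Finset (SimpleGraph (Fin n)) :=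
  Finset.univ.filter fun G => (∀ i, deg G i = d i) ∧ H₁ ≤ G ∧ Disjoint G H₂

lemma mem_realizations {d : Fin n → ℕ} {H₁ H₂ G : SimpleGraph (Fin n)} :
    G ∈ realizations d H₁ H₂ ↔ (∀ i, deg G i = d i) ∧ H₁ ≤ G ∧ Disjoint G H₂ := by
  simp [realizations]

lemma not_adj_of_disjoint {G H : SimpleGraph (Fin n)} (h : Disjoint G H) {a b : Fin n}
    (hG : G.Adj a b) : ¬ H.Adj a b := fun hH => by
  have : (G ⊓ H).Adj a b := ⟨hG, hH⟩
  rw [h.eq_bot] at this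
  exact this

lemma disjoint_of_not_adj {G H : SimpleGraph (Fin n)}
    (h : ∀ a b, G.Adj a b → ¬ H.Adj a b) : Disjoint G H := by
  rw [disjoint_iff_inf_le]
  intro a b hab
  exact h a b hab.1 hab.2

lemma fourCycle_adj {u v x y a b : Fin n} (huv : u ≠ v) (hux : u ≠ x) (hvy : v ≠ y)
    (hxy : x ≠ y) : (fourCycle u v x y).Adj a b ↔
      (s(a, b) = s(u, v) ∨ s(a, b) = s(x, y) ∨ s(a, b) = s(u, x) ∨ s(a, b) = s(v, y)) := by
  simp only [fourCycle, SimpleGraph.fromEdgeSet_adj, Set.mem_insert_iff, Set.mem_singleton_iff]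
  constructor
  · exact fun h => h.1
  · refine fun h => ⟨h, ?_⟩
    rintro rfl
    simp only [Sym2.eq_iff] at h
    grind

lemma symmDiff_adj (G H : SimpleGraph (Fin n)) (a b : Fin n) :
    (G ∆ H).Adj a b ↔ (G.Adj a b ∧ ¬ H.Adj a b) ∨ (H.Adj a b ∧ ¬ G.Adj a b) := by
  simp [symmDiff]

lemma deg_symmDiff_fourCycle {G : SimpleGraph (Fin n)} {u v x y : Fin n}
    (huy : u ≠ y) (hvx : v ≠ x) (hux' : u ≠ x) (hvy' : v ≠ y)
    (huv : G.Adj u v) (hxy : G.Adj x y) (hux : ¬ G.Adj u x) (hvy : ¬ G.Adj v y) (w : Fin n) :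
    deg (G ∆ fourCycle u v x y) w = deg G w := by
  have huv' := huv.ne
  have hxy' := hxy.ne
  have key : ∀ z, (G ∆ fourCycle u v x y).Adj w z ↔
      (G.Adj w z ∧ ¬ (s(w, z) = s(u, v) ∨ s(w, z) = s(x, y) ∨ s(w, z) = s(u, x) ∨
        s(w, z) = s(v, y))) ∨ ((s(w, z) = s(u, v) ∨ s(w, z) = s(x, y) ∨ s(w, z) = s(u, x) ∨
        s(w, z) = s(v, y)) ∧ ¬ G.Adj w z) := by
    intro z
    rw [symmDiff_adj, fourCycle_adj huv' hux' hvy' hxy']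
  have exch : ∀ a b, G.Adj w b → ¬ G.Adj w a →
      (∀ z, (G ∆ fourCycle u v x y).Adj w z ↔ z = a ∨ (G.Adj w z ∧ z ≠ b)) →
      deg (G ∆ fourCycle u v x y) w = deg G w := by
    intro a b hb ha h
    have : (G ∆ fourCycle u v x y).neighborSet w = insert a (G.neighborSet w \ {b}) := by
      ext z
      simpa using h z
    unfold deg
    rw [this]
    exact Set.ncard_exchange (by simpa using ha) (by simpa using hb)
  simp only [Sym2.eq_iff] at key
  have hvu := huv.symm
  have hyx := hxy.symm
  have hxu : ¬ G.Adj x u := fun h => hux h.symm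
  have hyv : ¬ G.Adj y v := fun h => hvy h.symm
  by_cases h1 : w = u
  · subst h1
    exact exch x v huv hux (by intro z; rw [key]; grind)
  by_cases h2 : w = v
  · subst h2
    exact exch y u hvu hvy (by intro z; rw [key]; grind)
  by_cases h3 : w = x
  · subst h3
    exact exch u y hxy hxu (by intro z; rw [key]; grind)
  by_cases h4 : w = y
  · subst h4
    exact exch v x hyx hyv (by intro z; rw [key]; grind)
  · have : (G ∆ fourCycle u v x y).neighborSet w = G.neighborSet w := by
      ext z
      simp only [SimpleGraph.mem_neighborSet, key]
      grind
    rw [deg, this, deg]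

/-- Replacing the edges `uv`, `xy` by `ux`, `vy` stays within the realizations. -/
lemma symmDiff_fourCycle_mem_realizations {d : Fin n → ℕ} {G H₁ H₂ : SimpleGraph (Fin n)}
    {u v x y : Fin n} (hG : G ∈ realizations d H₁ H₂)
    (huy : u ≠ y) (hvx : v ≠ x) (hux' : u ≠ x) (hvy' : v ≠ y)
    (huv : (G \ H₁).Adj u v) (hxy : (G \ H₁).Adj x y)
    (hux : ¬ (G ⊔ H₂).Adj u x) (hvy : ¬ (G ⊔ H₂).Adj v y) :
    G ∆ fourCycle u v x y ∈ realizations d H₁ H₂ := by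
  rw [mem_realizations] at hG ⊢
  obtain ⟨hd, h1, h2⟩ := hG
  simp only [SimpleGraph.sdiff_adj, SimpleGraph.sup_adj, not_or] at huv hxy hux hvy
  have hadj : ∀ a b, (fourCycle u v x y).Adj a b → ¬ H₁.Adj a b ∧ ¬ H₂.Adj a b := by
    intro a b hab
    rw [fourCycle_adj huv.1.ne hux' hvy' hxy.1.ne] at hab
    have aux : ∀ (H : SimpleGraph (Fin n)) (p q : Fin n), s(a, b) = s(p, q) →
        ¬ H.Adj p q → ¬ H.Adj a b := by
      intro H p q he hn hH
      apply hn
      rw [← SimpleGraph.mem_edgeSet] at hH ⊢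
      rwa [← he]
    rcases hab with h | h | h | h
    · exact ⟨aux _ _ _ h huv.2, aux _ _ _ h (not_adj_of_disjoint h2 huv.1)⟩
    · exact ⟨aux _ _ _ h hxy.2, aux _ _ _ h (not_adj_of_disjoint h2 hxy.1)⟩
    · exact ⟨aux _ _ _ h fun h' => hux.1 (h1 h'), aux _ _ _ h hux.2⟩
    · exact ⟨aux _ _ _ h fun h' => hvy.1 (h1 h'), aux _ _ _ h hvy.2⟩
  refine ⟨fun i => ?_, ?_, disjoint_of_not_adj ?_⟩
  · rw [deg_symmDiff_fourCycle huy hvx hux' hvy' huv.1 hxy.1 hux.1 hvy.1, hd]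
  · intro a b hab
    rw [symmDiff_adj]
    exact Or.inl ⟨h1 hab, fun h => (hadj a b h).1 hab⟩
  · intro a b hab
    rw [symmDiff_adj] at hab
    rcases hab with h | h
    · exact not_adj_of_disjoint h2 h.1
    · exact (hadj a b h.1).2

/-- The number of edges at `i` that a realization of `d` has outside `H`. -/
def freeDeg (d : Fin n → ℕ) (H : SimpleGraph (Fin n)) (i : Fin n) : ℕ := d i - deg H i

/-- The total number of half-edges that a realization of `d` has outside `H`. -/
def freeSum (d : Fin n → ℕ) (H : SimpleGraph (Fin n)) : ℕ := ∑ i, freeDeg d H i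

lemma deg_eq_card (G : SimpleGraph (Fin n)) [DecidableRel G.Adj] (v : Fin n) :
    deg G v = (Finset.univ.filter fun w => G.Adj v w).card := by
  rw [deg, ← Set.ncard_coe_finset]
  congr 1
  ext w
  simp

lemma deg_sdiff {d : Fin n → ℕ} {G H₁ H₂ : SimpleGraph (Fin n)}
    (hG : G ∈ realizations d H₁ H₂) (i : Fin n) : deg (G \ H₁) i = freeDeg d H₁ i := by
  rw [mem_realizations] at hG
  have : (G \ H₁).neighborSet i = G.neighborSet i \ H₁.neighborSet i := by
    ext w
    simp
  rw [freeDeg, ← hG.1 i, deg, deg, deg, this]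
  exact Set.ncard_sdiff fun w hw => hG.2.1 hw

lemma card_filter_fst_and {α β : Type*} [Fintype α] [Fintype β] (P : α → Prop)
    (Q : α → β → Prop) [DecidablePred P] [∀ a, DecidablePred (Q a)] :
    (Finset.univ.filter fun p : α × β => P p.1 ∧ Q p.1 p.2).card =
      ∑ a ∈ Finset.univ.filter P, (Finset.univ.filter (Q a)).card := by
  rw [Finset.card_filter, Fintype.sum_prod_type, Finset.sum_filter]
  refine Finset.sum_congr rfl fun a _ => ?_
  by_cases h : P a <;> simp [h]

lemma card_filter_snd_and {α β : Type*} [Fintype α] [Fintype β] (P : β → Prop)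
    (Q : α → β → Prop) [DecidablePred P] [∀ a, DecidablePred (Q a)] :
    (Finset.univ.filter fun p : α × β => P p.2 ∧ Q p.1 p.2).card =
      ∑ b ∈ Finset.univ.filter P, (Finset.univ.filter fun a => Q a b).card := by
  rw [Finset.card_filter, Fintype.sum_prod_type_right, Finset.sum_filter]
  refine Finset.sum_congr rfl fun b _ => ?_
  by_cases h : P b <;> simp [h]

lemma card_darts (G : SimpleGraph (Fin n)) [DecidableRel G.Adj] :
    (Finset.univ.filter fun p : Fin n × Fin n => G.Adj p.1 p.2).card = ∑ v, deg G v := by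
  have := card_filter_fst_and (fun _ : Fin n => True) G.Adj
  simpa [deg_eq_card] using this

lemma card_darts_sdiff {d : Fin n → ℕ} {G H₁ H₂ : SimpleGraph (Fin n)}
    (hG : G ∈ realizations d H₁ H₂) :
    (Finset.univ.filter fun p : Fin n × Fin n => (G \ H₁).Adj p.1 p.2).card = freeSum d H₁ := by
  rw [card_darts]
  exact Finset.sum_congr rfl fun i _ => deg_sdiff hG i

lemma card_neighbors_sdiff {d : Fin n → ℕ} {G H₁ H₂ : SimpleGraph (Fin n)}
    (hG : G ∈ realizations d H₁ H₂) (i : Fin n) :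
    (Finset.univ.filter fun w => (G \ H₁).Adj i w).card = freeDeg d H₁ i := by
  rw [← deg_eq_card, deg_sdiff hG]

lemma card_eq_or_adj_sup_le {G H : SimpleGraph (Fin n)} {a b : ℕ} {i : Fin n}
    (hG : deg G i ≤ a) (hH : deg H i ≤ b) :
    (Finset.univ.filter fun w => w = i ∨ (G ⊔ H).Adj i w).card ≤ 1 + a + b := by
  have : (Finset.univ.filter fun w => w = i ∨ (G ⊔ H).Adj i w) ⊆
      ({i} ∪ Finset.univ.filter fun w => G.Adj i w) ∪ Finset.univ.filter fun w => H.Adj i w := by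
    intro w
    simp only [Finset.mem_filter, Finset.mem_univ, true_and, SimpleGraph.sup_adj,
      Finset.mem_union, Finset.mem_singleton]
    tauto
  refine (Finset.card_le_card this).trans ((Finset.card_union_le _ _).trans
    (Nat.add_le_add ((Finset.card_union_le _ _).trans (Nat.add_le_add ?_ ?_)) ?_))
  · simp
  · rwa [← deg_eq_card]
  · rwa [← deg_eq_card]

lemma freeSum_le_card_switchable {d : Fin n → ℕ} {G H₁ H₂ : SimpleGraph (Fin n)} {Δ D : ℕ}
    (hd : ∀ i, d i ≤ Δ) (hD : ∀ i, deg H₂ i ≤ D) (hG : G ∈ realizations d H₁ H₂) (u v : Fin n) :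
    freeSum d H₁ ≤ (Finset.univ.filter fun p : Fin n × Fin n => (G \ H₁).Adj p.1 p.2 ∧
      ¬ (p.1 = u ∨ (G ⊔ H₂).Adj u p.1) ∧ ¬ (p.2 = v ∨ (G ⊔ H₂).Adj v p.2)).card +
      2 * (1 + Δ + D) * Δ := by
  have hdeg : ∀ i, deg G i ≤ Δ := fun i => by
    rw [(mem_realizations.1 hG).1 i]
    exact hd i
  have hfree : ∀ i, freeDeg d H₁ i ≤ Δ := fun i => (Nat.sub_le _ _).trans (hd i)
  set P₁ := Finset.univ.filter fun p : Fin n × Fin n =>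
    (p.1 = u ∨ (G ⊔ H₂).Adj u p.1) ∧ (G \ H₁).Adj p.1 p.2 with hP₁
  set P₂ := Finset.univ.filter fun p : Fin n × Fin n =>
    (p.2 = v ∨ (G ⊔ H₂).Adj v p.2) ∧ (G \ H₁).Adj p.1 p.2 with hP₂
  have h1 : P₁.card ≤ (1 + Δ + D) * Δ := by
    rw [hP₁, card_filter_fst_and (fun a => a = u ∨ (G ⊔ H₂).Adj u a) (G \ H₁).Adj]
    refine (Finset.sum_le_card_nsmul _ _ Δ fun a _ => ?_).trans ?_
    · rw [card_neighbors_sdiff hG]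
      exact hfree a
    · rw [smul_eq_mul]
      exact Nat.mul_le_mul_right _ (card_eq_or_adj_sup_le (hdeg u) (hD u))
  have h2 : P₂.card ≤ (1 + Δ + D) * Δ := by
    rw [hP₂, card_filter_snd_and (fun a => a = v ∨ (G ⊔ H₂).Adj v a) (G \ H₁).Adj]
    refine (Finset.sum_le_card_nsmul _ _ Δ fun a _ => ?_).trans ?_
    · simp_rw [SimpleGraph.adj_comm (G \ H₁) _ a]
      rw [card_neighbors_sdiff hG]
      exact hfree a
    · rw [smul_eq_mul]
      exact Nat.mul_le_mul_right _ (card_eq_or_adj_sup_le (hdeg v) (hD v))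
  rw [← card_darts_sdiff hG]
  have hsub : (Finset.univ.filter fun p : Fin n × Fin n => (G \ H₁).Adj p.1 p.2) ⊆
      ((Finset.univ.filter fun p : Fin n × Fin n => (G \ H₁).Adj p.1 p.2 ∧
      ¬ (p.1 = u ∨ (G ⊔ H₂).Adj u p.1) ∧ ¬ (p.2 = v ∨ (G ⊔ H₂).Adj v p.2)) ∪ P₁) ∪ P₂ := by
    intro p
    simp only [hP₁, hP₂, Finset.mem_filter, Finset.mem_univ, true_and, Finset.mem_union]
    grind
  have h3 := (Finset.card_le_card hsub).trans (Finset.card_union_le _ _)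
  have h4 := Finset.card_union_le (Finset.univ.filter fun p : Fin n × Fin n =>
    (G \ H₁).Adj p.1 p.2 ∧ ¬ (p.1 = u ∨ (G ⊔ H₂).Adj u p.1) ∧
      ¬ (p.2 = v ∨ (G ⊔ H₂).Adj v p.2)) P₁
  linarith

/-- Switching away the edge `uv`. -/
lemma card_adj_mul_freeSum_le {d : Fin n → ℕ} {H₁ H₂ : SimpleGraph (Fin n)} {Δ D : ℕ}
    (hd : ∀ i, d i ≤ Δ) (hD : ∀ i, deg H₂ i ≤ D) {u v : Fin n} (h1 : ¬ H₁.Adj u v) :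
    ((realizations d H₁ H₂).filter fun G => G.Adj u v).card * freeSum d H₁ ≤
      ((realizations d H₁ H₂).filter fun G => ¬ G.Adj u v).card *
        (freeDeg d H₁ u * freeDeg d H₁ v) +
      ((realizations d H₁ H₂).filter fun G => G.Adj u v).card * (2 * (1 + Δ + D) * Δ) := by
  set A := (realizations d H₁ H₂).filter fun G => G.Adj u v with hA
  set B := (realizations d H₁ H₂).filter fun G => ¬ G.Adj u v with hB
  set good : SimpleGraph (Fin n) → Finset (Fin n × Fin n) := fun G =>
    Finset.univ.filter fun p : Fin n × Fin n => (G \ H₁).Adj p.1 p.2 ∧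
      ¬ (p.1 = u ∨ (G ⊔ H₂).Adj u p.1) ∧ ¬ (p.2 = v ∨ (G ⊔ H₂).Adj v p.2) with hgood
  set target : SimpleGraph (Fin n) → Finset (Fin n × Fin n) := fun G =>
    (Finset.univ.filter fun w => (G \ H₁).Adj u w) ×ˢ
      (Finset.univ.filter fun w => (G \ H₁).Adj v w) with htarget
  have hinj : (A.sigma good).card ≤ (B.sigma target).card := by
    refine Finset.card_le_card_of_injOn
      (fun s => ⟨s.1 ∆ fourCycle u v s.2.1 s.2.2, s.2⟩) ?_ ?_
    · rintro ⟨G, x, y⟩ h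
      simp only [hA, hB, hgood, htarget, Finset.coe_sigma, Set.mem_sigma_iff, Finset.mem_coe,
        Finset.mem_filter, Finset.mem_univ, true_and, not_or, Finset.mem_product] at h ⊢
      obtain ⟨⟨hG, huv⟩, hxy, ⟨hxu, hux⟩, hyv, hvy⟩ := h
      have hux' := hux
      have hvy' := hvy
      simp only [SimpleGraph.sup_adj, SimpleGraph.sdiff_adj, not_or] at hux' hvy' hxy
      have huy : u ≠ y := by
        rintro rfl
        exact hvy'.1 huv.symm
      have hvx : v ≠ x := by
        rintro rfl
        exact hux'.1 huv
      have hle := (mem_realizations.1 hG).2.1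
      refine ⟨⟨symmDiff_fourCycle_mem_realizations hG huy hvx (Ne.symm hxu) (Ne.symm hyv)
        ⟨huv, h1⟩ (by simpa using hxy) hux hvy, ?_⟩, ?_, ?_⟩ <;>
        simp only [SimpleGraph.sdiff_adj, symmDiff_adj,
          fourCycle_adj huv.ne (Ne.symm hxu) (Ne.symm hyv) hxy.1.ne]
      · simp [huv]
      · exact ⟨Or.inr ⟨by simp, hux'.1⟩, fun h => hux'.1 (hle h)⟩
      · exact ⟨Or.inr ⟨by simp, hvy'.1⟩, fun h => hvy'.1 (hle h)⟩
    · rintro ⟨G, p⟩ _ ⟨G', p'⟩ _ h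
      simp only [Sigma.mk.injEq, heq_eq_eq] at h
      obtain ⟨h, rfl⟩ := h
      rw [symmDiff_left_injective _ h]
  rw [Finset.card_sigma, Finset.card_sigma] at hinj
  have h2 : ∑ G ∈ B, (target G).card = B.card * (freeDeg d H₁ u * freeDeg d H₁ v) := by
    rw [Finset.sum_const_nat]
    intro G hG
    have hG' := (Finset.mem_filter.1 hG).1
    rw [htarget, Finset.card_product, card_neighbors_sdiff hG', card_neighbors_sdiff hG']
  have h3 : A.card * freeSum d H₁ ≤
      ∑ G ∈ A, (good G).card + A.card * (2 * (1 + Δ + D) * Δ) := by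
    rw [← smul_eq_mul, ← smul_eq_mul A.card, ← Finset.sum_const, ← Finset.sum_const,
      ← Finset.sum_add_distrib]
    exact Finset.sum_le_sum fun G hG =>
      freeSum_le_card_switchable hd hD (Finset.mem_filter.1 hG).1 u v
  linarith

/-- Switching in the edge `uv`. -/
lemma card_not_adj_mul_le {d : Fin n → ℕ} {H₁ H₂ : SimpleGraph (Fin n)}
    {u v : Fin n} (huv : u ≠ v) (h2 : ¬ H₂.Adj u v) :
    ((realizations d H₁ H₂).filter fun G => ¬ G.Adj u v).card *
        (freeDeg d H₁ u * freeDeg d H₁ v) ≤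
      ((realizations d H₁ H₂).filter fun G => G.Adj u v).card * freeSum d H₁ +
      ∑ G ∈ realizations d H₁ H₂, (Finset.univ.filter fun p : Fin n × Fin n =>
        (p.1 ≠ v ∧ p.2 ≠ u) ∧ ((G \ H₁).Adj u p.1 ∧ (G \ H₁).Adj v p.2) ∧
        ((p.1 = p.2 ∨ (H₁ ⊔ H₂).Adj p.1 p.2) ∨ (G \ H₁).Adj p.1 p.2)).card := by
  set A := (realizations d H₁ H₂).filter fun G => G.Adj u v with hA
  set B := (realizations d H₁ H₂).filter fun G => ¬ G.Adj u v with hB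
  set bad : SimpleGraph (Fin n) → Finset (Fin n × Fin n) := fun G =>
    Finset.univ.filter fun p : Fin n × Fin n =>
        (p.1 ≠ v ∧ p.2 ≠ u) ∧ ((G \ H₁).Adj u p.1 ∧ (G \ H₁).Adj v p.2) ∧
        ((p.1 = p.2 ∨ (H₁ ⊔ H₂).Adj p.1 p.2) ∨ (G \ H₁).Adj p.1 p.2) with hbad
  set good : SimpleGraph (Fin n) → Finset (Fin n × Fin n) := fun G =>
    Finset.univ.filter fun p : Fin n × Fin n =>
        ((G \ H₁).Adj u p.1 ∧ (G \ H₁).Adj v p.2) ∧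
        ¬ ((p.1 = p.2 ∨ (H₁ ⊔ H₂).Adj p.1 p.2) ∨ (G \ H₁).Adj p.1 p.2) with hgood
  set darts : SimpleGraph (Fin n) → Finset (Fin n × Fin n) := fun G =>
    Finset.univ.filter fun p : Fin n × Fin n => (G \ H₁).Adj p.1 p.2 with hdarts
  have hinj : (B.sigma good).card ≤ (A.sigma darts).card := by
    refine Finset.card_le_card_of_injOn
      (fun s => ⟨s.1 ∆ fourCycle u s.2.1 v s.2.2, s.2⟩) ?_ ?_
    · rintro ⟨G, x, y⟩ h
      simp only [hA, hB, hgood, hdarts, Finset.coe_sigma, Set.mem_sigma_iff, Finset.mem_coe,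
        Finset.mem_filter, Finset.mem_univ, true_and, not_or] at h ⊢
      obtain ⟨⟨hG, hnuv⟩, ⟨hux, hvy⟩, ⟨hxy, hH⟩, hGxy⟩ := h
      simp only [SimpleGraph.sup_adj, SimpleGraph.sdiff_adj, not_or, not_and, not_not] at hH hGxy
      have huy : u ≠ y := by
        rintro rfl
        exact hnuv hvy.1.symm
      have hxv : x ≠ v := by
        rintro rfl
        exact hnuv hux.1
      have hnG : ¬ G.Adj x y := fun h => hH.1 (hGxy h)
      refine ⟨⟨symmDiff_fourCycle_mem_realizations hG huy hxv huv hxy hux hvy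
        (by simp [hnuv, h2]) (by simp [hnG, hH.2]), ?_⟩, ?_⟩ <;>
        simp only [SimpleGraph.sdiff_adj, symmDiff_adj,
          fourCycle_adj hux.1.ne huv hxy hvy.1.ne]
      · exact Or.inr ⟨by simp, hnuv⟩
      · exact ⟨Or.inr ⟨by simp, hnG⟩, hH.1⟩
    · rintro ⟨G, p⟩ _ ⟨G', p'⟩ _ h
      simp only [Sigma.mk.injEq, heq_eq_eq] at h
      obtain ⟨h, rfl⟩ := h
      rw [symmDiff_left_injective _ h]
  rw [Finset.card_sigma, Finset.card_sigma] at hinj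
  have h4 : ∑ G ∈ A, (darts G).card = A.card * freeSum d H₁ :=
    Finset.sum_const_nat fun G hG => card_darts_sdiff (Finset.mem_filter.1 hG).1
  have h3 : B.card * (freeDeg d H₁ u * freeDeg d H₁ v) ≤
      ∑ G ∈ B, (good G).card + ∑ G ∈ B, (bad G).card := by
    rw [← smul_eq_mul, ← Finset.sum_const, ← Finset.sum_add_distrib]
    refine Finset.sum_le_sum fun G hG => ?_
    obtain ⟨hG, hnuv⟩ := Finset.mem_filter.1 hG
    rw [← card_neighbors_sdiff hG, ← card_neighbors_sdiff hG, ← Finset.card_product]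
    refine (Finset.card_le_card ?_).trans (Finset.card_union_le _ _)
    rintro ⟨x, y⟩ h
    simp only [Finset.mem_product, Finset.mem_filter, Finset.mem_univ, true_and] at h
    have hxv : x ≠ v := by
      rintro rfl
      exact hnuv h.1.1
    have hyu : y ≠ u := by
      rintro rfl
      exact hnuv h.2.1.symm
    simp only [hgood, hbad, Finset.mem_union, Finset.mem_filter, Finset.mem_univ, true_and]
    tauto
  have h5 : ∑ G ∈ B, (bad G).card ≤ ∑ G ∈ realizations d H₁ H₂, (bad G).card :=
    Finset.sum_le_sum_of_subset (Finset.filter_subset _ _)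
  linarith

lemma deg_mono {G H : SimpleGraph (Fin n)} (h : G ≤ H) (i : Fin n) : deg G i ≤ deg H i :=
  Set.ncard_le_ncard fun _ hw => h hw

lemma deg_sup_le (G H : SimpleGraph (Fin n)) (i : Fin n) : deg (G ⊔ H) i ≤ deg G i + deg H i := by
  have : (G ⊔ H).neighborSet i = G.neighborSet i ∪ H.neighborSet i := by
    ext w
    simp
  rw [deg, this]
  exact Set.ncard_union_le _ _

lemma freeDeg_anti (d : Fin n → ℕ) {G H : SimpleGraph (Fin n)} (h : G ≤ H) (i : Fin n) :
    freeDeg d H i ≤ freeDeg d G i := Nat.sub_le_sub_left (deg_mono h i) _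

lemma freeSum_le_freeSum_sup_edge_add (d : Fin n → ℕ) (H : SimpleGraph (Fin n)) (u x : Fin n) :
    freeSum d H ≤ freeSum d (H ⊔ SimpleGraph.edge u x) + 2 := by
  have h1 : ∑ i, deg (SimpleGraph.edge u x) i ≤ 2 := by
    rw [← card_darts]
    refine (Finset.card_le_card (t := {(u, x), (x, u)}) ?_).trans Finset.card_le_two
    rintro ⟨a, b⟩ h
    simp only [Finset.mem_filter, SimpleGraph.edge_adj] at h
    simp only [Finset.mem_insert, Finset.mem_singleton, Prod.mk.injEq]
    exact h.2.1
  calc freeSum d H ≤ ∑ i, (freeDeg d (H ⊔ SimpleGraph.edge u x) i +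
        deg (SimpleGraph.edge u x) i) := by
        refine Finset.sum_le_sum fun i _ => ?_
        have := deg_sup_le H (SimpleGraph.edge u x) i
        unfold freeDeg
        omega
    _ ≤ _ := by
        rw [Finset.sum_add_distrib]
        exact Nat.add_le_add_left h1 _

lemma card_adj_mul_le {d : Fin n → ℕ} {H₁ H₂ : SimpleGraph (Fin n)} {Δ D μ : ℕ}
    (hd : ∀ i, d i ≤ Δ) (hD : ∀ i, deg H₂ i ≤ D) (hμ : μ ≤ freeSum d H₁)
    (hbad : 2 * (2 * (1 + Δ + D) * Δ) ≤ μ) {u v : Fin n} (h1 : ¬ H₁.Adj u v) :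
    ((realizations d H₁ H₂).filter fun G => G.Adj u v).card * μ ≤
      2 * (freeDeg d H₁ u * freeDeg d H₁ v) * (realizations d H₁ H₂).card := by
  have h := card_adj_mul_freeSum_le (H₂ := H₂) hd hD h1
  set A := ((realizations d H₁ H₂).filter fun G => G.Adj u v).card
  have hB : ((realizations d H₁ H₂).filter fun G => ¬ G.Adj u v).card ≤
    (realizations d H₁ H₂).card := Finset.card_filter_le _ _
  have h2 := Nat.mul_le_mul_left A hμ
  have h3 := Nat.mul_le_mul_left A hbad
  have h4 := Nat.mul_le_mul_right (freeDeg d H₁ u * freeDeg d H₁ v) hB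
  linarith

lemma card_sdiff_adj_mul_le {d : Fin n → ℕ} {H₁ H₂ : SimpleGraph (Fin n)} {Δ D μ : ℕ}
    (hd : ∀ i, d i ≤ Δ) (hD : ∀ i, deg H₂ i ≤ D) (hμ : μ ≤ freeSum d H₁)
    (hbad : 2 * (2 * (1 + Δ + D) * Δ) ≤ μ) (u v : Fin n) :
    ((realizations d H₁ H₂).filter fun G => (G \ H₁).Adj u v).card * μ ≤
      2 * (freeDeg d H₁ u * freeDeg d H₁ v) * (realizations d H₁ H₂).card := by
  by_cases h : H₁.Adj u v
  · rw [Finset.filter_false_of_mem fun G _ hG => hG.2 h]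
    simp
  · refine le_trans (Nat.mul_le_mul_right _ (Finset.card_le_card ?_))
      (card_adj_mul_le hd hD hμ hbad h)
    intro G hG
    rw [Finset.mem_filter] at hG ⊢
    exact ⟨hG.1, hG.2.1⟩

/-- Bounds for realizations containing `H₁ ∪ {ux}` transfer to those of `H₁`, at the cost of the
probability of the edge `ux`. -/
lemma card_filter_adj_and_mul_le {d : Fin n → ℕ} {H₁ H₂ : SimpleGraph (Fin n)} {Δ D μ : ℕ}
    (hd : ∀ i, d i ≤ Δ) (hD : ∀ i, deg H₂ i ≤ D) (hμ : μ ≤ freeSum d H₁)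
    (hbad : 2 * (2 * (1 + Δ + D) * Δ) ≤ μ) {u x : Fin n}
    {Q Q' : SimpleGraph (Fin n) → Prop} [DecidablePred Q] [DecidablePred Q'] {X Y : ℕ}
    (hQ : ∀ G, Q G → Q' G)
    (h : ((realizations d (H₁ ⊔ SimpleGraph.edge u x) H₂).filter Q').card * X ≤
      Y * (realizations d (H₁ ⊔ SimpleGraph.edge u x) H₂).card) :
    ((realizations d H₁ H₂).filter fun G => (G \ H₁).Adj u x ∧ Q G).card * (X * μ) ≤
      Y * (2 * (freeDeg d H₁ u * freeDeg d H₁ x)) * (realizations d H₁ H₂).card := by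
  by_cases hux : u = x ∨ H₁.Adj u x
  · rw [Finset.filter_false_of_mem]
    · simp
    · rintro G _ ⟨hG, _⟩
      rw [SimpleGraph.sdiff_adj] at hG
      rcases hux with rfl | hux
      · exact hG.1.ne rfl
      · exact hG.2 hux
  · rw [not_or] at hux
    have h1 := card_adj_mul_le (H₂ := H₂) hd hD hμ hbad hux.2
    have h2 : ((realizations d H₁ H₂).filter fun G => (G \ H₁).Adj u x ∧ Q G).card ≤
        ((realizations d (H₁ ⊔ SimpleGraph.edge u x) H₂).filter Q').card := by
      refine Finset.card_le_card fun G hG => ?_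
      rw [Finset.mem_filter, mem_realizations] at hG ⊢
      obtain ⟨⟨hGd, hG1, hG2⟩, hGux, hGQ⟩ := hG
      refine ⟨⟨hGd, sup_le hG1 ?_, hG2⟩, hQ G hGQ⟩
      rw [SimpleGraph.edge_le_iff]
      exact Or.inr hGux.1
    have h3 : (realizations d (H₁ ⊔ SimpleGraph.edge u x) H₂).card ≤
        ((realizations d H₁ H₂).filter fun G => G.Adj u x).card := by
      refine Finset.card_le_card fun G hG => ?_
      rw [Finset.mem_filter, mem_realizations]
      rw [mem_realizations] at hG
      obtain ⟨hGd, hG1, hG2⟩ := hG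
      refine ⟨⟨hGd, le_sup_left.trans hG1, hG2⟩, hG1 ?_⟩
      simp [SimpleGraph.edge_adj, hux.1]
    calc _ ≤ ((realizations d (H₁ ⊔ SimpleGraph.edge u x) H₂).filter Q').card * (X * μ) :=
          Nat.mul_le_mul_right _ h2
      _ = ((realizations d (H₁ ⊔ SimpleGraph.edge u x) H₂).filter Q').card * X * μ := by ring
      _ ≤ Y * (realizations d (H₁ ⊔ SimpleGraph.edge u x) H₂).card * μ :=
          Nat.mul_le_mul_right _ h
      _ ≤ Y * ((realizations d H₁ H₂).filter fun G => G.Adj u x).card * μ := by gcongr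
      _ = Y * (((realizations d H₁ H₂).filter fun G => G.Adj u x).card * μ) := by ring
      _ ≤ Y * (2 * (freeDeg d H₁ u * freeDeg d H₁ x) * (realizations d H₁ H₂).card) :=
          Nat.mul_le_mul_left _ h1
      _ = _ := by ring

lemma sdiff_sup_edge_adj {G H : SimpleGraph (Fin n)} {u x v y : Fin n} (h : s(u, x) ≠ s(v, y))
    (hG : (G \ H).Adj v y) : (G \ (H ⊔ SimpleGraph.edge u x)).Adj v y := by
  simp only [SimpleGraph.sdiff_adj, SimpleGraph.sup_adj, SimpleGraph.edge_adj, ne_eq,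
    Sym2.eq_iff] at *
  grind

lemma card_adj_and_adj_mul_le {d : Fin n → ℕ} {H₁ H₂ : SimpleGraph (Fin n)} {Δ D μ : ℕ}
    (hd : ∀ i, d i ≤ Δ) (hD : ∀ i, deg H₂ i ≤ D) (hμ : μ + 2 ≤ freeSum d H₁)
    (hbad : 2 * (2 * (1 + Δ + D) * Δ) ≤ μ) {u x v y : Fin n} (hne : s(u, x) ≠ s(v, y)) :
    ((realizations d H₁ H₂).filter fun G => (G \ H₁).Adj u x ∧ (G \ H₁).Adj v y).card * μ ^ 2 ≤
      4 * (freeDeg d H₁ u * freeDeg d H₁ x * (freeDeg d H₁ v * freeDeg d H₁ y)) *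
        (realizations d H₁ H₂).card := by
  have hsum := freeSum_le_freeSum_sup_edge_add d H₁ u x
  have hle : H₁ ≤ H₁ ⊔ SimpleGraph.edge u x := le_sup_left
  have h := card_filter_adj_and_mul_le (H₁ := H₁) (H₂ := H₂) (u := u) (x := x)
    (Q := fun G => (G \ H₁).Adj v y)
    (Q' := fun G => (G \ (H₁ ⊔ SimpleGraph.edge u x)).Adj v y)
    (X := μ) (Y := 2 * (freeDeg d H₁ v * freeDeg d H₁ y)) hd hD (by omega) hbad
    (fun G hG => sdiff_sup_edge_adj hne hG) (by
      refine le_trans (le_of_eq ?_) ((card_sdiff_adj_mul_le (H₁ := H₁ ⊔ SimpleGraph.edge u x)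
        (H₂ := H₂) hd hD (by omega) hbad v y).trans ?_)
      · congr!
      · gcongr 2 * (?_ * ?_) * _ <;> exact freeDeg_anti d hle _)
  refine le_of_eq_of_le ?_ (h.trans_eq ?_) <;> ring

lemma card_adj_and_adj_and_adj_mul_le {d : Fin n → ℕ} {H₁ H₂ : SimpleGraph (Fin n)}
    {Δ D μ : ℕ} (hd : ∀ i, d i ≤ Δ) (hD : ∀ i, deg H₂ i ≤ D) (hμ : μ + 4 ≤ freeSum d H₁)
    (hbad : 2 * (2 * (1 + Δ + D) * Δ) ≤ μ) {u x v y w z : Fin n} (h12 : s(u, x) ≠ s(v, y))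
    (h13 : s(u, x) ≠ s(w, z)) (h23 : s(v, y) ≠ s(w, z)) :
    ((realizations d H₁ H₂).filter fun G => (G \ H₁).Adj u x ∧ (G \ H₁).Adj v y ∧
        (G \ H₁).Adj w z).card * μ ^ 3 ≤
      8 * (freeDeg d H₁ u * freeDeg d H₁ x * (freeDeg d H₁ v * freeDeg d H₁ y) *
        (freeDeg d H₁ w * freeDeg d H₁ z)) * (realizations d H₁ H₂).card := by
  have hsum := freeSum_le_freeSum_sup_edge_add d H₁ u x
  have hle : H₁ ≤ H₁ ⊔ SimpleGraph.edge u x := le_sup_left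
  have h := card_filter_adj_and_mul_le (H₁ := H₁) (H₂ := H₂) (u := u) (x := x)
    (Q := fun G => (G \ H₁).Adj v y ∧ (G \ H₁).Adj w z)
    (Q' := fun G => (G \ (H₁ ⊔ SimpleGraph.edge u x)).Adj v y ∧
      (G \ (H₁ ⊔ SimpleGraph.edge u x)).Adj w z) (X := μ ^ 2)
    (Y := 4 * (freeDeg d H₁ v * freeDeg d H₁ y * (freeDeg d H₁ w * freeDeg d H₁ z)))
    hd hD (by omega) hbad
    (fun G hG => ⟨sdiff_sup_edge_adj h12 hG.1, sdiff_sup_edge_adj h13 hG.2⟩) (by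
      refine le_trans (le_of_eq ?_) ((card_adj_and_adj_mul_le (H₁ := H₁ ⊔ SimpleGraph.edge u x)
        (H₂ := H₂) hd hD (by omega) hbad h23).trans ?_)
      · congr!
      · gcongr 4 * (?_ * ?_ * (?_ * ?_)) * _ <;> exact freeDeg_anti d hle _)
  refine le_of_eq_of_le ?_ (h.trans_eq ?_) <;> ring

/-- The expected number of obstructions to switching in the edge `uv` is small. -/
lemma sum_card_obstructions_mul_le {d : Fin n → ℕ} {H₁ H₂ : SimpleGraph (Fin n)} {Δ D : ℕ}
    (hd : ∀ i, d i ≤ Δ) (hD : ∀ i, deg H₂ i ≤ D) (hH₁ : ∀ i, deg H₁ i ≤ Δ)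
    (hbad : 2 * (2 * (1 + Δ + D) * Δ) + 4 ≤ freeSum d H₁) (h8 : 8 ≤ freeSum d H₁)
    {u v : Fin n} (huv : u ≠ v) :
    (∑ G ∈ realizations d H₁ H₂, (Finset.univ.filter fun p : Fin n × Fin n =>
        (p.1 ≠ v ∧ p.2 ≠ u) ∧ ((G \ H₁).Adj u p.1 ∧ (G \ H₁).Adj v p.2) ∧
        ((p.1 = p.2 ∨ (H₁ ⊔ H₂).Adj p.1 p.2) ∨ (G \ H₁).Adj p.1 p.2)).card) * freeSum d H₁ ≤
      freeDeg d H₁ u * freeDeg d H₁ v * (realizations d H₁ H₂).card *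
        (16 * ((1 + Δ + D) * Δ) + 64 * Δ ^ 2) := by
  set m := freeSum d H₁ with hm
  set S := realizations d H₁ H₂ with hS
  set r := freeDeg d H₁ with hr
  obtain ⟨μ, hμ⟩ : ∃ μ, m = μ + 4 := ⟨m - 4, by omega⟩
  have hmμ : m ≤ 2 * μ := by omega
  have hrΔ : ∀ i, r i ≤ Δ := fun i => (Nat.sub_le _ _).trans (hd i)
  set R : Fin n × Fin n → Prop := fun p => p.2 = p.1 ∨ (H₁ ⊔ H₂).Adj p.1 p.2 with hR
  have hpt : ∀ p : Fin n × Fin n, (S.filter fun G => (p.1 ≠ v ∧ p.2 ≠ u) ∧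
        ((G \ H₁).Adj u p.1 ∧ (G \ H₁).Adj v p.2) ∧
        ((p.1 = p.2 ∨ (H₁ ⊔ H₂).Adj p.1 p.2) ∨ (G \ H₁).Adj p.1 p.2)).card * m ^ 3 ≤
      16 * (r u * r v) * S.card * m * (if R p then r p.1 * r p.2 else 0) +
        64 * (r u * r v) * S.card * (r p.1 ^ 2 * r p.2 ^ 2) := by
    rintro ⟨x, y⟩
    dsimp only
    by_cases hp : x ≠ v ∧ y ≠ u
    swap
    · simp [hp]
    have e12 : s(u, x) ≠ s(v, y) := by
      rw [ne_eq, Sym2.eq_iff]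
      grind
    have e13 : s(u, x) ≠ s(x, y) := by
      rw [ne_eq, Sym2.eq_iff]
      grind
    have e23 : s(v, y) ≠ s(x, y) := by
      rw [ne_eq, Sym2.eq_iff]
      grind
    have h2 := card_adj_and_adj_mul_le (H₁ := H₁) (H₂ := H₂) (μ := μ) hd hD (by omega) (by omega) e12
    have h3 := card_adj_and_adj_and_adj_mul_le (H₁ := H₁) (H₂ := H₂) (μ := μ) hd hD (by omega)
      (by omega) e12 e13 e23
    rw [← hr, ← hS] at h2 h3
    by_cases hRp : R (x, y)
    · rw [if_pos hRp]
      refine le_add_right ?_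
      calc _ ≤ (S.filter fun G => (G \ H₁).Adj u x ∧ (G \ H₁).Adj v y).card * m ^ 3 := by
            refine Nat.mul_le_mul_right _ (Finset.card_le_card fun G hG => ?_)
            rw [Finset.mem_filter] at hG ⊢
            exact ⟨hG.1, hG.2.2.1⟩
        _ ≤ (S.filter fun G => (G \ H₁).Adj u x ∧ (G \ H₁).Adj v y).card *
              ((2 * μ) ^ 2 * m) := by
            rw [pow_succ m 2]
            gcongr
        _ = 4 * m * ((S.filter fun G => (G \ H₁).Adj u x ∧ (G \ H₁).Adj v y).card * μ ^ 2) := by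
            ring
        _ ≤ _ := Nat.mul_le_mul_left _ h2
        _ = _ := by ring
    · rw [if_neg hRp, mul_zero, zero_add]
      calc _ ≤ (S.filter fun G => (G \ H₁).Adj u x ∧ (G \ H₁).Adj v y ∧
              (G \ H₁).Adj x y).card * m ^ 3 := by
            refine Nat.mul_le_mul_right _ (Finset.card_le_card fun G hG => ?_)
            rw [Finset.mem_filter] at hG ⊢
            simp only [hR] at hRp
            exact ⟨hG.1, hG.2.2.1.1, hG.2.2.1.2,
              hG.2.2.2.resolve_left fun h => hRp (h.imp_left Eq.symm)⟩
        _ ≤ (S.filter fun G => (G \ H₁).Adj u x ∧ (G \ H₁).Adj v y ∧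
              (G \ H₁).Adj x y).card * (2 * μ) ^ 3 := by gcongr
        _ = 8 * ((S.filter fun G => (G \ H₁).Adj u x ∧ (G \ H₁).Adj v y ∧
              (G \ H₁).Adj x y).card * μ ^ 3) := by ring
        _ ≤ _ := Nat.mul_le_mul_left _ h3
        _ = _ := by ring
  have hsum : ∑ i, r i = m := rfl
  have hs1 : ∑ p : Fin n × Fin n, (if R p then r p.1 * r p.2 else 0) ≤
      m * ((1 + Δ + D) * Δ) := by
    rw [Fintype.sum_prod_type, ← hsum, Finset.sum_mul]
    refine Finset.sum_le_sum fun x _ => ?_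
    rw [← Finset.sum_filter]
    dsimp only
    rw [← Finset.mul_sum]
    refine Nat.mul_le_mul_left _ ((Finset.sum_le_card_nsmul _ _ Δ fun y _ => hrΔ y).trans ?_)
    rw [smul_eq_mul]
    refine Nat.mul_le_mul_right _ ?_
    convert card_eq_or_adj_sup_le (hH₁ x) (hD x) using 2
  have hs2 : ∑ p : Fin n × Fin n, r p.1 ^ 2 * r p.2 ^ 2 ≤ (Δ * m) ^ 2 := by
    have : ∑ i, r i ^ 2 ≤ Δ * m := by
      rw [← hsum, Finset.mul_sum]
      refine Finset.sum_le_sum fun i _ => ?_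
      rw [pow_two]
      exact Nat.mul_le_mul_right _ (hrΔ i)
    rw [Fintype.sum_prod_type]
    dsimp only
    rw [← Finset.sum_mul_sum, ← pow_two]
    gcongr
  have hswap : ∑ G ∈ S, (Finset.univ.filter fun p : Fin n × Fin n =>
        (p.1 ≠ v ∧ p.2 ≠ u) ∧ ((G \ H₁).Adj u p.1 ∧ (G \ H₁).Adj v p.2) ∧
        ((p.1 = p.2 ∨ (H₁ ⊔ H₂).Adj p.1 p.2) ∨ (G \ H₁).Adj p.1 p.2)).card =
      ∑ p : Fin n × Fin n, (S.filter fun G => (p.1 ≠ v ∧ p.2 ≠ u) ∧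
        ((G \ H₁).Adj u p.1 ∧ (G \ H₁).Adj v p.2) ∧
        ((p.1 = p.2 ∨ (H₁ ⊔ H₂).Adj p.1 p.2) ∨ (G \ H₁).Adj p.1 p.2)).card := by
    simp_rw [Finset.card_filter]
    exact Finset.sum_comm
  rw [hswap]
  have hm0 : 0 < m ^ 2 := by positivity
  refine Nat.le_of_mul_le_mul_right ?_ hm0
  rw [mul_assoc, ← pow_succ', Finset.sum_mul]
  refine (Finset.sum_le_sum fun p _ => hpt p).trans ?_
  rw [Finset.sum_add_distrib, ← Finset.mul_sum, ← Finset.mul_sum]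
  calc _ ≤ 16 * (r u * r v) * S.card * m * (m * ((1 + Δ + D) * Δ)) +
        64 * (r u * r v) * S.card * (Δ * m) ^ 2 := by gcongr
    _ = _ := by ring

lemma sum_deg (G : SimpleGraph (Fin n)) : ∑ i, deg G i = 2 * nedges G := by
  have h1 : ∀ i, deg G i = G.degree i := fun i => by
    rw [deg_eq_card, ← SimpleGraph.card_neighborFinset_eq_degree]
    congr 1
    ext w
    simp
  have h2 : nedges G = G.edgeFinset.card := by
    rw [nedges, ← SimpleGraph.coe_edgeFinset, Set.ncard_coe_finset]
  simp_rw [h1, h2]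
  exact G.sum_degrees_eq_twice_card_edges

lemma freeSum_add {d : Fin n → ℕ} {H : SimpleGraph (Fin n)} (h : ∀ i, deg H i ≤ d i) :
    freeSum d H + 2 * nedges H = ∑ i, d i := by
  rw [← sum_deg, freeSum, ← Finset.sum_add_distrib]
  exact Finset.sum_congr rfl fun i _ => Nat.sub_add_cancel (h i)

lemma prob_eq_card_div_card (d : Fin n → ℕ) (H₁ H₂ : SimpleGraph (Fin n)) (u v : Fin n) :
    prob (fun G => (∀ i, deg G i = d i) ∧ H₁ ≤ G ∧ Disjoint G.edgeSet H₂.edgeSet)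
        (fun G => G.Adj u v) =
      (((realizations d H₁ H₂).filter fun G => G.Adj u v).card : ℝ) /
        ((realizations d H₁ H₂).card : ℝ) := by
  have h : ∀ P : SimpleGraph (Fin n) → Prop, Nat.card {G // P G} =
      (Finset.univ.filter P).card := fun P => by
    rw [Nat.card_eq_fintype_card, Fintype.card_subtype]
  unfold prob realizations
  rw [h, h, Finset.filter_filter]
  simp only [SimpleGraph.disjoint_edgeSet]

end Switching

lemma abs_mul_div_sub_one_le {A B S m r b T E F : ℝ} (hA : 0 ≤ A) (hAB : A + B = S) (hS : 0 < S)
    (hr : 0 < r) (hm : 0 < m) (hb : 0 ≤ b) (hbm : 2 * b ≤ m)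
    (h₁ : A * m ≤ B * r + A * b) (h₂ : B * r ≤ A * m + T) (hT : T * m ≤ r * S * E)
    (hF₁ : 2 * b ≤ F) (hF₂ : E + 2 * r ≤ F) : |A * m / (S * r) - 1| ≤ F / m := by
  have hSr : 0 < S * r := mul_pos hS hr
  have hup : A * (m - b) ≤ S * r := by nlinarith [mul_nonneg hA hr.le]
  have hhalf : A * m ≤ 2 * (S * r) := by nlinarith [mul_nonneg hA (sub_nonneg.2 hbm)]
  rw [abs_le]
  constructor
  · rw [neg_le_sub_iff_le_add, ← sub_le_iff_le_add, one_sub_div hm.ne', div_le_div_iff₀ hm hSr]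
    have h3 : S * r * (E + 2 * r) ≤ S * r * F := mul_le_mul_of_nonneg_left hF₂ hSr.le
    have h4 : B * r * m ≤ (A * m + T) * m := mul_le_mul_of_nonneg_right h₂ hm.le
    have h5 : A * m * r ≤ 2 * (S * r) * r := mul_le_mul_of_nonneg_right hhalf hr.le
    subst hAB
    linarith
  · rw [sub_le_iff_le_add, div_add_one hm.ne', div_le_div_iff₀ hSr hm]
    have h3 : A * (m - b) * (m + 2 * b) ≤ S * r * (m + 2 * b) :=
      mul_le_mul_of_nonneg_right hup (by linarith)
    have h4 : 0 ≤ A * b * (m - 2 * b) := mul_nonneg (mul_nonneg hA hb) (by linarith)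
    have h5 : S * r * (2 * b) ≤ S * r * F := mul_le_mul_of_nonneg_left hF₁ hSr.le
    linarith

/-- McKay-type conditional edge probability with relative error `O(Δ²/M)`. -/
theorem stmt0 (K c : ℝ) (hK : 1 ≤ K) (hc : 0 < c) :
    ∃ C δ : ℝ, 0 < C ∧ 0 < δ ∧
      ∀ (n : ℕ), 1 ≤ n → ∀ (d : Fin n → ℕ) (M Δ : ℕ),
        M = ∑ i, d i → Δ = Finset.univ.sup d →
        Even M → (Δ : ℝ) ^ 2 ≤ δ * M →
        ∀ H₁ H₂ : SimpleGraph (Fin n),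
        Disjoint H₁.edgeSet H₂.edgeSet →
        (∀ i, deg H₁ i ≤ d i) →
        (maxDeg H₂ : ℝ) ≤ K * Δ →
        c * M ≤ (M : ℝ) - 2 * nedges H₁ →
        ∀ u v : Fin n, u ≠ v → ¬ (H₁ ⊔ H₂).Adj u v →
        (∃ G : SimpleGraph (Fin n),
          (∀ i, deg G i = d i) ∧ H₁ ≤ G ∧ Disjoint G.edgeSet H₂.edgeSet) →
        ∃ θ : ℝ, |θ| ≤ C * (Δ : ℝ) ^ 2 / M ∧
          prob (fun G => (∀ i, deg G i = d i) ∧ H₁ ≤ G ∧ Disjoint G.edgeSet H₂.edgeSet)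
              (fun G => G.Adj u v)
            = (1 + θ) * (((d u : ℝ) - deg H₁ u) * ((d v : ℝ) - deg H₁ v)) /
                ((M : ℝ) - 2 * nedges H₁) := by
  refine ⟨(98 + 16 * K) / c, c / (12 + 4 * K), by positivity, by positivity, ?_⟩
  intro n _ d M Δ hM hΔ _ hδ H₁ H₂ _ hH₁ hH₂ hcM u v huv hnot hne
  classical
  obtain ⟨hn1, hn2⟩ : ¬ H₁.Adj u v ∧ ¬ H₂.Adj u v := by
    simpa only [SimpleGraph.sup_adj, not_or] using hnot
  have hd : ∀ i, d i ≤ Δ := fun i => hΔ ▸ Finset.le_sup (Finset.mem_univ i)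
  have hD : ∀ i, deg H₂ i ≤ maxDeg H₂ := fun i => Finset.le_sup (Finset.mem_univ i)
  set D := maxDeg H₂
  have hmR : (M : ℝ) - 2 * nedges H₁ = freeSum d H₁ := by
    rw [hM, ← freeSum_add hH₁]
    push_cast
    ring
  have hrR : ∀ i, (d i : ℝ) - deg H₁ i = freeDeg d H₁ i := fun i => by
    rw [freeDeg, Nat.cast_sub (hH₁ i)]
  have hS : 0 < (realizations d H₁ H₂).card := by
    obtain ⟨G, hG1, hG2, hG3⟩ := hne
    exact Finset.card_pos.2
      ⟨G, mem_realizations.2 ⟨hG1, hG2, SimpleGraph.disjoint_edgeSet.1 hG3⟩⟩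
  rw [hmR] at hcM ⊢
  rw [hrR, hrR, prob_eq_card_div_card]
  rcases Nat.eq_zero_or_pos (freeDeg d H₁ u * freeDeg d H₁ v) with hr | hr
  · refine ⟨0, by rw [abs_zero]; positivity, ?_⟩
    have : ((realizations d H₁ H₂).filter fun G => G.Adj u v) = ∅ := by
      refine Finset.filter_false_of_mem fun G hG hGuv => ?_
      have hu : 0 < freeDeg d H₁ u := by
        rw [← card_neighbors_sdiff hG]
        exact Finset.card_pos.2 ⟨v, by simp [hGuv, hn1]⟩
      have hv : 0 < freeDeg d H₁ v := by
        rw [← card_neighbors_sdiff hG]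
        exact Finset.card_pos.2 ⟨u, by simp [hGuv.symm, SimpleGraph.adj_comm H₁ v u, hn1]⟩
      exact (Nat.mul_pos hu hv).ne' hr
    rw [← Nat.cast_mul, hr, this]
    simp
  · have hru : freeDeg d H₁ u ≤ Δ := (Nat.sub_le _ _).trans (hd u)
    have hrv : freeDeg d H₁ v ≤ Δ := (Nat.sub_le _ _).trans (hd v)
    have hΔ1 : 1 ≤ Δ := (Nat.pos_of_mul_pos_right hr).trans_le hru
    have hΔR : (1 : ℝ) ≤ Δ := by exact_mod_cast hΔ1
    have hΔ2 : (1 : ℝ) ≤ (Δ : ℝ) ^ 2 := one_le_pow₀ hΔR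
    have hbig : (12 + 4 * K) * (Δ : ℝ) ^ 2 ≤ freeSum d H₁ := by
      refine le_trans ?_ hcM
      rw [div_mul_eq_mul_div, le_div_iff₀ (by positivity)] at hδ
      linarith
    have hDΔ : (1 + Δ + D : ℝ) * Δ ≤ (2 + K) * (Δ : ℝ) ^ 2 := by
      have : (1 + Δ + D : ℝ) ≤ (2 + K) * Δ := by linarith
      calc (1 + Δ + D : ℝ) * Δ ≤ (2 + K) * Δ * Δ := by gcongr
        _ = _ := by ring
    have hbad : 2 * (2 * (1 + Δ + D) * Δ) + 4 ≤ freeSum d H₁ := by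
      have : (2 * (2 * (1 + Δ + D) * Δ) + 4 : ℝ) ≤ freeSum d H₁ := by linarith
      exact_mod_cast this
    have h8 : 8 ≤ freeSum d H₁ := by
      have : (8 : ℝ) ≤ freeSum d H₁ := by nlinarith
      exact_mod_cast this
    have hup := card_adj_mul_freeSum_le (H₂ := H₂) hd hD hn1
    have hlow := card_not_adj_mul_le (d := d) (H₁ := H₁) huv hn2
    have hobs := sum_card_obstructions_mul_le hd hD (fun i => (hH₁ i).trans (hd i)) hbad h8 huv
    have hAB := Finset.card_filter_add_card_filter_not (s := realizations d H₁ H₂)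
      (fun G => G.Adj u v)
    have hrr : freeDeg d H₁ u * freeDeg d H₁ v ≤ Δ ^ 2 := by
      rw [pow_two]
      exact Nat.mul_le_mul hru hrv
    set A := ((realizations d H₁ H₂).filter fun G => G.Adj u v).card
    set B := ((realizations d H₁ H₂).filter fun G => ¬ G.Adj u v).card
    set S := (realizations d H₁ H₂).card
    set m := freeSum d H₁
    set r := freeDeg d H₁ u * freeDeg d H₁ v with hrdef
    obtain ⟨T, hlow, hobs⟩ : ∃ T, B * r ≤ A * m + T ∧
        T * m ≤ r * S * (16 * ((1 + Δ + D) * Δ) + 64 * Δ ^ 2) := ⟨_, hlow, hobs⟩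
    have hm0 : (0 : ℝ) < m := by
      have : 0 < m := by omega
      exact_mod_cast this
    have hr0 : (0 : ℝ) < r := by exact_mod_cast hr
    have hS0 : (0 : ℝ) < S := by exact_mod_cast hS
    have hM0 : (0 : ℝ) < M := by
      have : (m : ℝ) ≤ M := by
        rw [← hmR]
        linarith [(nedges H₁).cast_nonneg (α := ℝ)]
      linarith
    have hrrR : (r : ℝ) ≤ (Δ : ℝ) ^ 2 := by exact_mod_cast hrr
    have hmain := abs_mul_div_sub_one_le (A := A) (B := B) (S := S) (m := m) (r := r)
      (T := T) (b := 2 * (1 + Δ + D) * Δ) (E := 16 * ((1 + Δ + D) * Δ) + 64 * Δ ^ 2)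
      (F := (98 + 16 * K) * (Δ : ℝ) ^ 2)
      (by positivity) (by exact_mod_cast hAB) hS0 hr0 hm0 (by positivity)
      (by
        have : 2 * (2 * (1 + Δ + D) * Δ) ≤ m := by omega
        exact_mod_cast this)
      (by exact_mod_cast hup) (by exact_mod_cast hlow) (by exact_mod_cast hobs)
      (by nlinarith) (by linarith)
    refine ⟨A * m / (S * r) - 1, hmain.trans ?_, ?_⟩
    · calc (98 + 16 * K) * (Δ : ℝ) ^ 2 / m ≤ (98 + 16 * K) * (Δ : ℝ) ^ 2 / (c * M) := by gcongr
        _ = _ := by field_simp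
    · have hrc : (freeDeg d H₁ u : ℝ) * freeDeg d H₁ v = r := by
        rw [hrdef]
        push_cast
        rfl
      rw [hrc]
      field_simp
      ring
end
end

section
/- For all constants K ≥ 1 and c > 0 there exist constants C > 0 and δ > 0 with the following property. Let 𝐝 = (d_1,…,d_n) be a degree sequence with even sum M and maximum entry Δ satisfying Δ² ≤ δM. Let H₁ and H₂ be edge-disjoint graphs on [n] with 𝐝^{H₁} ⪯ 𝐝 and Δ_{H₂} ≤ KΔ. Set 𝐝̃ = 𝐝 − 𝐝^{H₁}, M̃ = Σ_i d̃_i, M̃₂ = Σ_i d̃_i(d̃_i − 1), and suppose M̃ ≥ cM. Let u ≠ v with uv ∉ H₁ ∪ H₂, and suppose the set of graphs with degree sequence 𝐝 containing H₁ and avoiding all edges of H₂ is nonempty. Then P(uv ∈ 𝒢(n,𝐝) | H₁⁺, H₂⁻) = (1 + θ)·(d̃_u d̃_v/M̃)·(1 − M̃₂²/M̃³ − M̃₂/M̃² − Σ_{(x,y)∈𝒲} d̃_x d̃_y/M̃²)·(1 − φ̄_{H₁}(uv)/(M − 2|H₁|)) for some real θ with |θ| ≤ C·Δ⁵n/M³,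 where φ̄_{H₁}(uv) = −2(d̃_u + d̃_v) + 2 − Σ_{x∈N_{H₁∪H₂}(u)} d̃_x − Σ_{y∈N_{H₁∪H₂}(v)} d̃_y − (d̃_u + d̃_v − 2)M̃₂/M̃ + d̃_u d̃_v, and 𝒲 is the set of ordered pairs (x,y) with xy ∈ H₁ ∪ H₂, xu ∉ H₁ ∪ H₂, yv ∉ H₁ ∪ H₂, and {x,y} ∩ {u,v} = ∅. -/
open Filter

noncomputable section

section Families

open Classical Finset

variable {V : Type*} [Fintype V]

/-- The adjacency indicator of `G`, as a real number. -/
def adjInd (G : SimpleGraph V) (x y : V) : ℝ := if G.Adj x y then 1 else 0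

/-- The graphs with degree sequence `d` sharing no edge with `F`. -/
def family (d : V → ℝ) (F : SimpleGraph V) : Finset (SimpleGraph V) :=
  {G | (∀ i, ∑ j, adjInd G i j = d i) ∧ Disjoint G F}

/-- The degree sequence left over once an edge `uv` has been removed. -/
def dropEdge (d : V → ℝ) (u v : V) : V → ℝ :=
  fun i => d i - (if i = u then 1 else 0) - (if i = v then 1 else 0)

omit [Fintype V] in
theorem adjInd_comm (G : SimpleGraph V) (x y : V) : adjInd G x y = adjInd G y x := by
  simp [adjInd, G.adj_comm]

omit [Fintype V] in
theorem adjInd_self (G : SimpleGraph V) (x : V) : adjInd G x x = 0 := by simp [adjInd]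

omit [Fintype V] in
theorem adjInd_nonneg (G : SimpleGraph V) (x y : V) : 0 ≤ adjInd G x y := by
  unfold adjInd; split_ifs <;> norm_num

omit [Fintype V] in
theorem adjInd_le_one (G : SimpleGraph V) (x y : V) : adjInd G x y ≤ 1 := by
  unfold adjInd; split_ifs <;> norm_num

omit [Fintype V] in
theorem adjInd_eq_zero_or_one (G : SimpleGraph V) (x y : V) :
    adjInd G x y = 0 ∨ adjInd G x y = 1 := by
  unfold adjInd; split_ifs <;> simp

theorem mem_family {d : V → ℝ} {F G : SimpleGraph V} :
    G ∈ family d F ↔ (∀ i, ∑ j, adjInd G i j = d i) ∧ Disjoint G F := by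
  simp [family]

omit [Fintype V] in
theorem disjoint_iff_forall_adj {F G : SimpleGraph V} :
    Disjoint G F ↔ ∀ x y, G.Adj x y → ¬ F.Adj x y := by
  rw [← SimpleGraph.disjoint_edgeSet, Set.disjoint_left]
  constructor
  · intro h x y hxy
    exact h (a := s(x, y)) hxy
  · intro h e
    induction e with
    | h x y => exact h x y

theorem adjInd_eq_zero_of_mem {d : V → ℝ} {F G : SimpleGraph V} (hG : G ∈ family d F)
    {x y : V} (h : F.Adj x y) : adjInd G x y = 0 := by
  have := disjoint_iff_forall_adj.1 (mem_family.1 hG).2 x y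
  simp only [adjInd, ite_eq_right_iff, one_ne_zero, imp_false]
  tauto

theorem sum_adjInd_of_mem {d : V → ℝ} {F G : SimpleGraph V} (hG : G ∈ family d F) (i : V) :
    ∑ j, adjInd G i j = d i := (mem_family.1 hG).1 i

theorem sum_adjInd_left_of_mem {d : V → ℝ} {F G : SimpleGraph V} (hG : G ∈ family d F) (i : V) :
    ∑ j, adjInd G j i = d i := by
  simp_rw [adjInd_comm G _ i]
  exact sum_adjInd_of_mem hG i

theorem exists_nat_of_mem {d : V → ℝ} {F G : SimpleGraph V} (hG : G ∈ family d F) (i : V) :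
    ∃ k : ℕ, d i = k := by
  rw [← sum_adjInd_of_mem hG i]
  exact ⟨#{j | G.Adj i j}, by simp only [adjInd, sum_boole]⟩

theorem nonneg_of_mem {d : V → ℝ} {F G : SimpleGraph V} (hG : G ∈ family d F) (i : V) :
    0 ≤ d i := by
  obtain ⟨k, hk⟩ := exists_nat_of_mem hG i
  simp [hk]

theorem mul_sub_one_nonneg_of_mem {d : V → ℝ} {F G : SimpleGraph V} (hG : G ∈ family d F)
    (i : V) : 0 ≤ d i * (d i - 1) := by
  obtain ⟨k, hk⟩ := exists_nat_of_mem hG i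
  rw [hk]
  rcases k with _ | k
  · simp
  · push_cast
    rw [add_sub_cancel_right]
    positivity

omit [Fintype V] in
theorem adjInd_sup_edge {F : SimpleGraph V} {u v : V} (huv : u ≠ v) (hF : ¬ F.Adj u v)
    (x y : V) : adjInd (F ⊔ SimpleGraph.edge u v) x y =
      adjInd F x y + (if x = u ∧ y = v then 1 else 0) + (if x = v ∧ y = u then 1 else 0) := by
  have hF' : ¬ F.Adj v u := fun h => hF h.symm
  simp only [adjInd, SimpleGraph.sup_adj, SimpleGraph.edge_adj]
  by_cases h1 : x = u ∧ y = v
  · obtain ⟨rfl, rfl⟩ := h1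
    simp [hF, huv]
  · by_cases h2 : x = v ∧ y = u
    · obtain ⟨rfl, rfl⟩ := h2
      simp [hF', huv, huv.symm]
    · simp [h1, h2]

omit [Fintype V] in
theorem adjInd_sup_edge_of_ne (F : SimpleGraph V) {u v x y : V} (h : s(x, y) ≠ s(u, v)) :
    adjInd (F ⊔ SimpleGraph.edge u v) x y = adjInd F x y := by
  have : ¬ ((x = u ∧ y = v) ∨ (x = v ∧ y = u)) := by simpa using h
  simp [adjInd, SimpleGraph.edge_adj, this]

theorem sum_adjInd_sup_edge {F : SimpleGraph V} {u v : V} (huv : u ≠ v) (hF : ¬ F.Adj u v)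
    (x : V) : ∑ y, adjInd (F ⊔ SimpleGraph.edge u v) x y =
      ∑ y, adjInd F x y + (if x = u then 1 else 0) + (if x = v then 1 else 0) := by
  simp_rw [adjInd_sup_edge huv hF, sum_add_distrib, ite_and]
  by_cases h1 : x = u <;> by_cases h2 : x = v <;> simp [h1, h2]

/-- Deleting the edge `uv` identifies the members of the family through `uv` with a family for the
reduced degree sequence. -/
theorem sum_family_adjInd_mul {d : V → ℝ} {F : SimpleGraph V} {u v : V} (huv : u ≠ v)
    (hF : ¬ F.Adj u v) (g : SimpleGraph V → ℝ)
    (hg : ∀ G, g (G ⊔ SimpleGraph.edge u v) = g G) :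
    ∑ G ∈ family d F, adjInd G u v * g G =
      ∑ G ∈ family (dropEdge d u v) (F ⊔ SimpleGraph.edge u v), g G := by
  have : ∑ G ∈ family d F, adjInd G u v * g G = ∑ G ∈ (family d F) with G.Adj u v, g G := by
    rw [sum_filter]
    exact sum_congr rfl fun G _ => by simp [adjInd]
  rw [this]
  symm
  have key : ∀ G ∈ family (dropEdge d u v) (F ⊔ SimpleGraph.edge u v), ¬ G.Adj u v := by
    intro G hG h
    exact disjoint_iff_forall_adj.1 (mem_family.1 hG).2 u v h
      (by simp [SimpleGraph.edge_adj, huv])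
  refine sum_bij' (fun G _ => G ⊔ SimpleGraph.edge u v) (fun G _ => G \ SimpleGraph.edge u v)
    ?_ ?_ ?_ ?_ ?_
  · intro G hG
    have hk := key G hG
    rw [mem_filter, mem_family]
    refine ⟨⟨fun i => ?_, ?_⟩, by simp [SimpleGraph.edge_adj, huv]⟩
    · rw [sum_adjInd_sup_edge huv hk, sum_adjInd_of_mem hG]
      unfold dropEdge; ring
    · have h1 := disjoint_iff_forall_adj.1 (mem_family.1 hG).2
      rw [disjoint_iff_forall_adj]
      intro x y hxy hFxy
      rcases hxy with hxy | hxy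
      · exact h1 x y hxy (Or.inl hFxy)
      · rw [SimpleGraph.edge_adj] at hxy
        rcases hxy.1 with ⟨rfl, rfl⟩ | ⟨rfl, rfl⟩
        · exact hF hFxy
        · exact hF hFxy.symm
  · intro G hG
    rw [mem_filter] at hG
    have hsup : (G \ SimpleGraph.edge u v) ⊔ SimpleGraph.edge u v = G := by
      refine sdiff_sup_cancel ?_
      rw [SimpleGraph.edge_le_iff]
      exact Or.inr hG.2
    have hn : ¬ (G \ SimpleGraph.edge u v).Adj u v := by simp [SimpleGraph.edge_adj, huv]
    rw [mem_family]
    refine ⟨fun i => ?_, ?_⟩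
    · have h := sum_adjInd_sup_edge huv hn i
      rw [hsup, sum_adjInd_of_mem hG.1] at h
      unfold dropEdge; rw [h]; ring
    · exact disjoint_sup_right.2 ⟨(mem_family.1 hG.1).2.mono_left sdiff_le, disjoint_sdiff_self_left⟩
  · intro G hG
    refine (Disjoint.sup_sdiff_cancel_right ?_)
    exact (disjoint_sup_right.1 (mem_family.1 hG).2).2
  · intro G hG
    refine sdiff_sup_cancel ?_
    rw [SimpleGraph.edge_le_iff]
    exact Or.inr (mem_filter.1 hG).2
  · intro G hG
    exact (hg G).symm

theorem sum_family_one_sub_adjInd_mul {d : V → ℝ} {F : SimpleGraph V} {u v : V}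
    (g : SimpleGraph V → ℝ) :
    ∑ G ∈ family d F, (1 - adjInd G u v) * g G =
      ∑ G ∈ family d (F ⊔ SimpleGraph.edge u v), g G := by
  have : family d (F ⊔ SimpleGraph.edge u v) = {G ∈ family d F | ¬ G.Adj u v} := by
    ext G
    rw [mem_filter, mem_family, mem_family, disjoint_sup_right, and_assoc,
      SimpleGraph.disjoint_edge]
  rw [this, sum_filter]
  refine sum_congr rfl fun G _ => ?_
  by_cases h : G.Adj u v <;> simp [adjInd, h]

theorem card_family_eq_add {d : V → ℝ} {F : SimpleGraph V} {u v : V} (huv : u ≠ v)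
    (hF : ¬ F.Adj u v) :
    (#(family d F) : ℝ) = #(family d (F ⊔ SimpleGraph.edge u v)) +
      #(family (dropEdge d u v) (F ⊔ SimpleGraph.edge u v)) := by
  have h1 := sum_family_adjInd_mul (d := d) huv hF (fun _ => 1) (fun _ => rfl)
  have h2 := sum_family_one_sub_adjInd_mul (d := d) (F := F) (u := u) (v := v) (fun _ => 1)
  simp only [mul_one, sum_const, nsmul_eq_mul, sum_sub_distrib] at h1 h2
  linarith

theorem sum_family_adjInd {d : V → ℝ} {F : SimpleGraph V} {u v : V} (huv : u ≠ v)
    (hF : ¬ F.Adj u v) : ∑ G ∈ family d F, adjInd G u v =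
      #(family (dropEdge d u v) (F ⊔ SimpleGraph.edge u v)) := by
  have h1 := sum_family_adjInd_mul (d := d) huv hF (fun _ => 1) (fun _ => rfl)
  simpa using h1

/-- The indicator that in `G` the edge `xy` can be traded, together with `uv`, for `ux` and
`vy`. -/
def fwdInd (F : SimpleGraph V) (u v : V) (G : SimpleGraph V) (x y : V) : ℝ :=
  if x = u ∨ x = v ∨ y = u ∨ y = v ∨ F.Adj u x ∨ F.Adj v y then 0
  else adjInd G x y * ((1 - adjInd G u x) * (1 - adjInd G v y))

/-- The indicator that in `G` the edges `ux` and `vy` can be traded for `xy` and `uv`. -/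
def revInd (F : SimpleGraph V) (u v : V) (G : SimpleGraph V) (x y : V) : ℝ :=
  if x = y ∨ F.Adj x y then 0
  else adjInd G u x * (adjInd G v y * (1 - adjInd G x y))

theorem sum_fwdInd_eq_sum_revInd_apply {d : V → ℝ} {F : SimpleGraph V} {u v : V} (huv : u ≠ v)
    (x y : V) :
    ∑ G ∈ family (dropEdge d u v) (F ⊔ SimpleGraph.edge u v), fwdInd F u v G x y =
      ∑ G ∈ family d (F ⊔ SimpleGraph.edge u v), revInd F u v G x y := by
  have hF'uv : (F ⊔ SimpleGraph.edge u v).Adj u v := by simp [SimpleGraph.edge_adj, huv]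
  have hF'le : ∀ a b, F.Adj a b → (F ⊔ SimpleGraph.edge u v).Adj a b := fun a b h => Or.inl h
  by_cases hbad : x = u ∨ x = v ∨ y = u ∨ y = v ∨ F.Adj u x ∨ F.Adj v y
  · have h1 : ∀ G, fwdInd F u v G x y = 0 := fun G => if_pos hbad
    simp only [h1, sum_const_zero]
    symm
    refine sum_eq_zero fun G hG => ?_
    have hprod : adjInd G u x * adjInd G v y = 0 := by
      rcases hbad with rfl | rfl | rfl | rfl | h | h
      · simp [adjInd_self]
      · simp [adjInd_eq_zero_of_mem hG hF'uv]
      · simp [adjInd_eq_zero_of_mem hG hF'uv.symm]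
      · simp [adjInd_self]
      · simp [adjInd_eq_zero_of_mem hG (hF'le _ _ h)]
      · simp [adjInd_eq_zero_of_mem hG (hF'le _ _ h)]
    unfold revInd
    split_ifs
    · rfl
    · rw [← mul_assoc, hprod, zero_mul]
  · have h1 : ∀ G, fwdInd F u v G x y =
        adjInd G x y * ((1 - adjInd G u x) * (1 - adjInd G v y)) := fun G => if_neg hbad
    simp only [h1]
    push Not at hbad
    obtain ⟨hxu, hxv, hyu, hyv, hux, hvy⟩ := hbad
    by_cases hxy : x = y ∨ F.Adj x y
    · have h2 : ∀ G, revInd F u v G x y = 0 := fun G => if_pos hxy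
      simp only [h2, sum_const_zero]
      refine sum_eq_zero fun G hG => ?_
      rcases hxy with rfl | h
      · simp [adjInd_self]
      · simp [adjInd_eq_zero_of_mem hG (hF'le _ _ h)]
    · have h2 : ∀ G, revInd F u v G x y =
        adjInd G u x * (adjInd G v y * (1 - adjInd G x y)) := fun G => if_neg hxy
      simp only [h2]
      push Not at hxy
      obtain ⟨hxy, hFxy⟩ := hxy
      have e1 : s(u, x) ≠ s(x, y) := by simp; grind
      have e2 : s(v, y) ≠ s(x, y) := by simp; grind
      have e3 : s(v, y) ≠ s(u, x) := by simp; grind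
      rw [sum_family_adjInd_mul hxy (by simp [SimpleGraph.edge_adj, hFxy]; grind)
          (fun G => (1 - adjInd G u x) * (1 - adjInd G v y)) (fun G => by
            simp only [adjInd_sup_edge_of_ne G e1, adjInd_sup_edge_of_ne G e2]),
        sum_family_one_sub_adjInd_mul (fun G => 1 - adjInd G v y),
        sum_family_adjInd_mul hxu.symm (by simp [SimpleGraph.edge_adj, hux]; grind)
          (fun G => adjInd G v y * (1 - adjInd G x y)) (fun G => by
            simp only [adjInd_sup_edge_of_ne G e1.symm, adjInd_sup_edge_of_ne G e3]),
        sum_family_adjInd_mul hyv.symm (by simp [SimpleGraph.edge_adj, hvy]; grind)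
          (fun G => 1 - adjInd G x y) (fun G => by
            simp only [adjInd_sup_edge_of_ne G e2.symm])]
      have h3 := fun (d : V → ℝ) F => sum_family_one_sub_adjInd_mul (d := d) (F := F) (u := v) (v := y)
        (fun _ => 1)
      have h4 := fun (d : V → ℝ) F => sum_family_one_sub_adjInd_mul (d := d) (F := F) (u := x) (v := y)
        (fun _ => 1)
      simp only [mul_one] at h3 h4
      rw [h3, h4]
      congr 2
      · funext i
        unfold dropEdge
        ring
      · ac_rfl

theorem sum_fwdInd_eq_sum_revInd {d : V → ℝ} {F : SimpleGraph V} {u v : V} (huv : u ≠ v) :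
    ∑ G ∈ family (dropEdge d u v) (F ⊔ SimpleGraph.edge u v), ∑ x, ∑ y, fwdInd F u v G x y =
      ∑ G ∈ family d (F ⊔ SimpleGraph.edge u v), ∑ x, ∑ y, revInd F u v G x y := by
  rw [sum_comm, sum_comm (s := family d _)]
  refine sum_congr rfl fun x _ => ?_
  rw [sum_comm, sum_comm (s := family d _)]
  exact sum_congr rfl fun y _ => sum_fwdInd_eq_sum_revInd_apply huv x y

/-- `d` and `F` are bounded by `D` up to the slack `k`, and `m` is, up to the slack `2 * k`, the
sum of `d`, which is large compared with `D ^ 2`. -/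
structure IsSparse (d : V → ℝ) (F : SimpleGraph V) (D m k : ℝ) : Prop where
  one_le : 1 ≤ D
  sq_le : 10000 * D ^ 2 ≤ m
  le : ∀ i, d i ≤ D
  sum_adjInd_le : ∀ i, ∑ j, adjInd F i j ≤ D + k
  abs_sum_sub_le : |∑ i, d i - m| ≤ 2 * k

namespace IsSparse

variable {d : V → ℝ} {F : SimpleGraph V} {D m k : ℝ}

theorem m_pos (h : IsSparse d F D m k) : 0 < m := by
  have := h.one_le
  have := h.sq_le
  nlinarith

theorem D_pos (h : IsSparse d F D m k) : 0 < D := zero_lt_one.trans_le h.one_le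

theorem sum_adjInd_sup_edge_le (h : IsSparse d F D m k) {u v : V} (huv : u ≠ v)
    (hF : ¬ F.Adj u v) (i : V) :
    ∑ j, adjInd (F ⊔ SimpleGraph.edge u v) i j ≤ D + (k + 1) := by
  rw [sum_adjInd_sup_edge huv hF]
  have := h.sum_adjInd_le i
  by_cases h1 : i = u
  · have h2 : ¬ i = v := fun h2 => huv (h1.symm.trans h2)
    simp only [h1, if_true, huv, if_false]
    rw [h1] at this
    linarith
  · simp only [h1, if_false]
    split_ifs <;> linarith

theorem sup_edge (h : IsSparse d F D m k) {u v : V} (huv : u ≠ v) (hF : ¬ F.Adj u v) :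
    IsSparse d (F ⊔ SimpleGraph.edge u v) D m (k + 1) :=
  ⟨h.one_le, h.sq_le, h.le, h.sum_adjInd_sup_edge_le huv hF,
    h.abs_sum_sub_le.trans (by linarith)⟩

end IsSparse

omit [Fintype V] in
theorem dropEdge_le (d : V → ℝ) (u v i : V) : dropEdge d u v i ≤ d i := by
  unfold dropEdge
  split_ifs <;> linarith

theorem sum_dropEdge (d : V → ℝ) (u v : V) : ∑ i, dropEdge d u v i = ∑ i, d i - 2 := by
  simp only [dropEdge, sum_sub_distrib, sum_ite_eq', mem_univ, if_true]
  ring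

namespace IsSparse

variable {d : V → ℝ} {F : SimpleGraph V} {D m k : ℝ}

theorem dropEdge_sup_edge (h : IsSparse d F D m k) {u v : V} (huv : u ≠ v) (hF : ¬ F.Adj u v) :
    IsSparse (dropEdge d u v) (F ⊔ SimpleGraph.edge u v) D m (k + 1) := by
  refine ⟨h.one_le, h.sq_le, fun i => (dropEdge_le d u v i).trans (h.le i),
    h.sum_adjInd_sup_edge_le huv hF, ?_⟩
  have := abs_le.1 h.abs_sum_sub_le
  rw [sum_dropEdge, abs_le]
  constructor <;> linarith

theorem sum_le_two_mul (h : IsSparse d F D m k) (hk : k ≤ 8) : ∑ i, d i ≤ 2 * m := by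
  have h1 := (abs_le.1 h.abs_sum_sub_le).2
  have h2 := h.one_le
  have h3 := h.sq_le
  nlinarith

theorem abs_sum_fwdInd_sub_le (h : IsSparse d F D m k) (hk : k ≤ 8) {u v : V}
    {G : SimpleGraph V} (hG : G ∈ family (dropEdge d u v) (F ⊔ SimpleGraph.edge u v)) :
    |∑ x, ∑ y, fwdInd F u v G x y - m| ≤ 50 * D ^ 2 := by
  have hD := h.one_le
  set p : V → V → ℝ := fun w x =>
    (if x = u then 1 else 0) + (if x = v then 1 else 0) + adjInd G w x + adjInd F w x with hp
  have hp0 : ∀ w x, 0 ≤ p w x := fun w x => by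
    have h1 := adjInd_nonneg G w x
    have h2 := adjInd_nonneg F w x
    simp only [hp]
    split_ifs <;> linarith
  have hpsum : ∀ w, ∑ x, p w x ≤ 12 * D := fun w => by
    simp only [hp, sum_add_distrib, sum_ite_eq', mem_univ, if_true]
    have h1 := h.sum_adjInd_le w
    have h2 := sum_adjInd_of_mem hG w
    have h3 := (dropEdge_le d u v w).trans (h.le w)
    linarith
  have hpd : ∀ w, ∑ x, p w x * dropEdge d u v x ≤ 12 * D ^ 2 := fun w => by
    calc ∑ x, p w x * dropEdge d u v x ≤ ∑ x, p w x * D := by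
          gcongr with x
          · exact hp0 w x
          · exact (dropEdge_le d u v x).trans (h.le x)
      _ = (∑ x, p w x) * D := by rw [sum_mul]
      _ ≤ 12 * D * D := by gcongr; exact hpsum w
      _ = 12 * D ^ 2 := by ring
  have hup : ∀ x y, fwdInd F u v G x y ≤ adjInd G x y := fun x y => by
    unfold fwdInd
    split_ifs
    · exact adjInd_nonneg G x y
    · rcases adjInd_eq_zero_or_one G u x with h1 | h1 <;>
        rcases adjInd_eq_zero_or_one G v y with h2 | h2 <;> rw [h1, h2] <;>
        have := adjInd_nonneg G x y <;> linarith
  have hlow : ∀ x y, adjInd G x y - (adjInd G x y * p u x + adjInd G x y * p v y) ≤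
      fwdInd F u v G x y := fun x y => by
    have h1 := hp0 u x
    have h2 := hp0 v y
    rcases adjInd_eq_zero_or_one G x y with ha | ha
    · simp [fwdInd, ha]
    · have h3 : ∀ w z, 1 ≤ p w z ∨ (z ≠ u ∧ z ≠ v ∧ adjInd G w z = 0 ∧ ¬ F.Adj w z) := by
        intro w z
        have h1 := adjInd_nonneg G w z
        have h2 := adjInd_nonneg F w z
        by_cases hz : z ≠ u ∧ z ≠ v ∧ adjInd G w z = 0 ∧ ¬ F.Adj w z
        · exact Or.inr hz
        · left
          simp only [hp]
          by_cases e1 : z = u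
          · rw [if_pos e1]; split_ifs <;> linarith
          by_cases e2 : z = v
          · rw [if_pos e2]; split_ifs; linarith
          by_cases e3 : F.Adj w z
          · have : adjInd F w z = 1 := if_pos e3
            split_ifs; linarith
          · have : adjInd G w z = 1 :=
              (adjInd_eq_zero_or_one G w z).resolve_left fun e4 => hz ⟨e1, e2, e4, e3⟩
            split_ifs; linarith
      have h0 : 0 ≤ fwdInd F u v G x y := by
        unfold fwdInd
        split_ifs
        · exact le_rfl
        · have := adjInd_le_one G u x
          have := adjInd_le_one G v y
          exact mul_nonneg (adjInd_nonneg _ _ _) (mul_nonneg (by linarith) (by linarith))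
      rcases h3 u x with h4 | ⟨a1, a2, a3, a4⟩
      · rw [ha]; linarith
      · rcases h3 v y with h5 | ⟨b1, b2, b3, b4⟩
        · rw [ha]; linarith
        · have : fwdInd F u v G x y = 1 := by
            simp [fwdInd, *]
          rw [ha, this]; linarith
  have htot : ∑ x, ∑ y, adjInd G x y = ∑ i, d i - 2 := by
    simp_rw [sum_adjInd_of_mem hG]
    exact sum_dropEdge d u v
  have hs := abs_le.1 h.abs_sum_sub_le
  have hU : ∑ x, ∑ y, fwdInd F u v G x y ≤ ∑ x, ∑ y, adjInd G x y :=
    sum_le_sum fun x _ => sum_le_sum fun y _ => hup x y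
  have hL : ∑ x, ∑ y, (adjInd G x y - (adjInd G x y * p u x + adjInd G x y * p v y)) ≤
      ∑ x, ∑ y, fwdInd F u v G x y := sum_le_sum fun x _ => sum_le_sum fun y _ => hlow x y
  have e1 : ∑ x, ∑ y, adjInd G x y * p u x = ∑ x, p u x * dropEdge d u v x := by
    refine sum_congr rfl fun x _ => ?_
    rw [← sum_mul, sum_adjInd_of_mem hG, mul_comm]
  have e2 : ∑ x, ∑ y, adjInd G x y * p v y = ∑ y, p v y * dropEdge d u v y := by
    rw [sum_comm]
    refine sum_congr rfl fun y _ => ?_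
    rw [← sum_mul, sum_adjInd_left_of_mem hG, mul_comm]
  simp only [sum_sub_distrib, sum_add_distrib] at hL
  rw [e1, e2] at hL
  have := hpd u
  have := hpd v
  rw [abs_le]
  constructor <;> nlinarith

theorem sum_revInd_le {G : SimpleGraph V} {F' : SimpleGraph V} (hG : G ∈ family d F') (u v : V) :
    ∑ x, ∑ y, revInd F u v G x y ≤ d u * d v := by
  rw [← sum_adjInd_of_mem hG u, ← sum_adjInd_of_mem hG v, sum_mul_sum]
  refine sum_le_sum fun x _ => sum_le_sum fun y _ => ?_
  have h1 := adjInd_nonneg G u x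
  have h2 := adjInd_nonneg G v y
  have h3 := adjInd_nonneg G x y
  unfold revInd
  split_ifs
  · positivity
  · gcongr
    nlinarith

theorem sum_adjInd_le_mul_card (h : IsSparse d F D m k) (hk : k ≤ 8) (u v : V) :
    ∑ G ∈ family d F, adjInd G u v ≤ 2 * (d u * d v) / m * #(family d F) := by
  have hm := h.m_pos
  rcases (family d F).eq_empty_or_nonempty with he | ⟨G₀, hG₀⟩
  · simp [he]
  have hdu := nonneg_of_mem hG₀ u
  have hdv := nonneg_of_mem hG₀ v
  by_cases hdeg : u = v ∨ F.Adj u v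
  · rw [sum_eq_zero fun G hG => ?_]
    · positivity
    · rcases hdeg with rfl | hF
      · exact adjInd_self G u
      · exact adjInd_eq_zero_of_mem hG hF
  push Not at hdeg
  obtain ⟨huv, hF⟩ := hdeg
  have hcard := card_family_eq_add (d := d) huv hF
  rw [sum_family_adjInd huv hF]
  have h1 : (#(family (dropEdge d u v) (F ⊔ SimpleGraph.edge u v)) : ℝ) * (m / 2) ≤
      ∑ G ∈ family (dropEdge d u v) (F ⊔ SimpleGraph.edge u v), ∑ x, ∑ y, fwdInd F u v G x y := by
    rw [← nsmul_eq_mul, ← sum_const]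
    refine sum_le_sum fun G hG => ?_
    have h2 := (abs_le.1 (h.abs_sum_fwdInd_sub_le hk hG)).1
    have h3 := h.sq_le
    linarith
  rw [sum_fwdInd_eq_sum_revInd huv] at h1
  have h4 : ∑ G ∈ family d (F ⊔ SimpleGraph.edge u v), ∑ x, ∑ y, revInd F u v G x y ≤
      #(family d (F ⊔ SimpleGraph.edge u v)) * (d u * d v) := by
    rw [← nsmul_eq_mul, ← sum_const]
    exact sum_le_sum fun G hG => sum_revInd_le hG u v
  have h5 : (#(family d (F ⊔ SimpleGraph.edge u v)) : ℝ) * (d u * d v) ≤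
      #(family d F) * (d u * d v) := by
    refine mul_le_mul_of_nonneg_right ?_ (by positivity)
    rw [hcard]
    have : (0 : ℝ) ≤ #(family (dropEdge d u v) (F ⊔ SimpleGraph.edge u v)) := by positivity
    linarith
  rw [div_mul_eq_mul_div, le_div_iff₀ hm]
  linarith

theorem sum_adjInd_mul_le (h : IsSparse d F D m k) (hk : k ≤ 7) {p q r s : V}
    (hne : s(r, s) ≠ s(p, q)) :
    ∑ G ∈ family d F, adjInd G p q * adjInd G r s ≤
      4 * ((d p * d q) * (d r * d s)) / m ^ 2 * #(family d F) := by
  have hm := h.m_pos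
  rcases (family d F).eq_empty_or_nonempty with he | ⟨G₀, hG₀⟩
  · simp [he]
  have hd := nonneg_of_mem hG₀
  have hp := hd p
  have hq := hd q
  have hr := hd r
  have hs := hd s
  by_cases hdeg : p = q ∨ F.Adj p q
  · rw [sum_eq_zero fun G hG => ?_]
    · positivity
    · rcases hdeg with rfl | hF
      · simp [adjInd_self]
      · simp [adjInd_eq_zero_of_mem hG hF]
  push Not at hdeg
  obtain ⟨hpq, hF⟩ := hdeg
  rw [sum_family_adjInd_mul hpq hF _ fun G => adjInd_sup_edge_of_ne G hne]
  have h1 := (h.dropEdge_sup_edge hpq hF).sum_adjInd_le_mul_card (by linarith) r s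
  have h2 := h.sum_adjInd_le_mul_card (by linarith) p q
  rw [sum_family_adjInd hpq hF] at h2
  refine h1.trans ?_
  rcases (family (dropEdge d p q) (F ⊔ SimpleGraph.edge p q)).eq_empty_or_nonempty with
    he | ⟨G₁, hG₁⟩
  · simp only [he, card_empty, Nat.cast_zero, mul_zero]
    positivity
  have hr' := nonneg_of_mem hG₁ r
  have hs' := nonneg_of_mem hG₁ s
  calc _ ≤ 2 * (d r * d s) / m * (2 * (d p * d q) / m * #(family d F)) := by
        gcongr
        · exact dropEdge_le d p q r
        · exact dropEdge_le d p q s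
    _ = _ := by field_simp; ring

theorem sum_adjInd_mul_mul_le (h : IsSparse d F D m k) (hk : k ≤ 6) {p q r s t w : V}
    (h12 : s(r, s) ≠ s(p, q)) (h13 : s(t, w) ≠ s(p, q)) (h23 : s(t, w) ≠ s(r, s)) :
    ∑ G ∈ family d F, adjInd G p q * (adjInd G r s * adjInd G t w) ≤
      8 * ((d p * d q) * ((d r * d s) * (d t * d w))) / m ^ 3 * #(family d F) := by
  have hm := h.m_pos
  rcases (family d F).eq_empty_or_nonempty with he | ⟨G₀, hG₀⟩
  · simp [he]
  have hd := nonneg_of_mem hG₀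
  have hp := hd p
  have hq := hd q
  have hr := hd r
  have hs := hd s
  have ht := hd t
  have hw := hd w
  by_cases hdeg : p = q ∨ F.Adj p q
  · rw [sum_eq_zero fun G hG => ?_]
    · positivity
    · rcases hdeg with rfl | hF
      · simp [adjInd_self]
      · simp [adjInd_eq_zero_of_mem hG hF]
  push Not at hdeg
  obtain ⟨hpq, hF⟩ := hdeg
  rw [sum_family_adjInd_mul hpq hF (fun G => adjInd G r s * adjInd G t w) fun G => by
    simp only [adjInd_sup_edge_of_ne G h12, adjInd_sup_edge_of_ne G h13]]
  have h1 := (h.dropEdge_sup_edge hpq hF).sum_adjInd_mul_le (by linarith) h23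
  have h2 := h.sum_adjInd_le_mul_card (by linarith) p q
  rw [sum_family_adjInd hpq hF] at h2
  refine h1.trans ?_
  rcases (family (dropEdge d p q) (F ⊔ SimpleGraph.edge p q)).eq_empty_or_nonempty with
    he | ⟨G₁, hG₁⟩
  · simp only [he, card_empty, Nat.cast_zero, mul_zero]
    positivity
  have hd' := nonneg_of_mem hG₁
  have hr' := hd' r
  have hs' := hd' s
  have ht' := hd' t
  have hw' := hd' w
  have hle := dropEdge_le d p q
  calc _ ≤ 4 * ((d r * d s) * (d t * d w)) / m ^ 2 * (2 * (d p * d q) / m * #(family d F)) := by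
        gcongr <;> apply hle
    _ = _ := by field_simp; ring

end IsSparse

theorem sum_sum_revInd_eq {d : V → ℝ} {F F' G : SimpleGraph V} (hG : G ∈ family d F')
    (hF : F ≤ F') (u v : V) :
    ∑ x, ∑ y, revInd F u v G x y = d u * d v - (∑ x, adjInd G u x * adjInd G v x +
      ∑ x, ∑ y, adjInd F x y * (adjInd G u x * adjInd G v y) +
      ∑ x, ∑ y, adjInd G u x * (adjInd G v y * adjInd G x y)) := by
  have key : ∀ x y, revInd F u v G x y = adjInd G u x * adjInd G v y -
      ((if x = y then adjInd G u x * adjInd G v y else 0) +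
        adjInd F x y * (adjInd G u x * adjInd G v y) +
        adjInd G u x * (adjInd G v y * adjInd G x y)) := fun x y => by
    unfold revInd
    by_cases h1 : x = y
    · subst h1
      simp [adjInd_self]
    · by_cases h2 : F.Adj x y
      · have h3 : adjInd F x y = 1 := if_pos h2
        have h4 : adjInd G x y = 0 := adjInd_eq_zero_of_mem hG (hF h2)
        simp [h1, h2, h3, h4]
      · have h3 : adjInd F x y = 0 := if_neg h2
        simp only [h1, h2, h3, or_self, if_false]
        ring
  simp only [key, sum_sub_distrib, sum_add_distrib, sum_ite_eq, mem_univ, if_true]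
  rw [← sum_mul_sum, sum_adjInd_of_mem hG, sum_adjInd_of_mem hG]

theorem sum_sq_le_of_sum_le {d : V → ℝ} {D m : ℝ} (h0 : ∀ i, 0 ≤ d i) (hD : ∀ i, d i ≤ D)
    (hD0 : 0 ≤ D) (hs : ∑ i, d i ≤ m) : ∑ i, d i * d i ≤ D * m := by
  calc ∑ i, d i * d i ≤ ∑ i, D * d i := by
        gcongr with i
        · exact h0 i
        · exact hD i
    _ = D * ∑ i, d i := by rw [mul_sum]
    _ ≤ D * m := by gcongr

theorem sum_adjInd_mul_le_of_le {F : SimpleGraph V} {g : V → V → ℝ} {b : V → ℝ} {E m : ℝ}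
    (hF : ∀ i, ∑ j, adjInd F i j ≤ E) (hE : 0 ≤ E) (hg : ∀ i j, g i j ≤ b i) (hb : ∀ i, 0 ≤ b i)
    (hs : ∑ i, b i ≤ m) : ∑ x, ∑ y, adjInd F x y * g x y ≤ E * m := by
  calc ∑ x, ∑ y, adjInd F x y * g x y ≤ ∑ x, ∑ y, adjInd F x y * b x := by
        gcongr with x _ y
        · exact adjInd_nonneg F x y
        · exact hg x y
    _ = ∑ x, (∑ y, adjInd F x y) * b x := by simp_rw [sum_mul]
    _ ≤ ∑ x, E * b x := by
        gcongr with x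
        · exact hb x
        · exact hF x
    _ = E * ∑ x, b x := by rw [mul_sum]
    _ ≤ E * m := by gcongr

/-- `X` agrees with `Y` up to the relative error `ε`. -/
def Approx (ε X Y : ℝ) : Prop := |X - Y| ≤ ε * Y

theorem Approx.nonneg {ε X Y : ℝ} (h : Approx ε X Y) (hε : 0 ≤ ε) (hX : 0 ≤ X) : 0 ≤ Y := by
  unfold Approx at h
  have h1 := (abs_le.1 h).2
  nlinarith

theorem Approx.mono {ε ε' X Y : ℝ} (h : Approx ε X Y) (hε : 0 ≤ ε) (hX : 0 ≤ X) (hle : ε ≤ ε') :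
    Approx ε' X Y :=
  le_trans h (mul_le_mul_of_nonneg_right hle (h.nonneg hε hX))

theorem Approx.trans {a b q X Y Z : ℝ} (h : Approx a X Y) (h' : Approx b Z (q * X)) (hX : 0 ≤ X)
    (hZ : 0 ≤ Z) (ha : 0 ≤ a) (ha1 : a < 1) (hb : 0 ≤ b) : Approx (a + b + a * b) Z (q * Y) := by
  have hY := h.nonneg ha hX
  have hqX := h'.nonneg hb hZ
  unfold Approx at h h' ⊢
  obtain ⟨h1, h2⟩ := abs_le.1 h
  obtain ⟨h3, h4⟩ := abs_le.1 h'
  rcases le_or_gt 0 q with hq | hq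
  · have h5 := mul_le_mul_of_nonneg_left h1 hq
    have h6 := mul_le_mul_of_nonneg_left h2 hq
    have h7 := mul_le_mul_of_nonneg_left h6 hb
    rw [abs_le]
    constructor <;> nlinarith
  · have hX0 : X = 0 := by nlinarith
    subst hX0
    have hY0 : Y = 0 := by nlinarith
    subst hY0
    simpa using h'

namespace IsSparse

variable {d : V → ℝ} {F : SimpleGraph V} {D m k : ℝ}

theorem sum_revInd_defect_le (h : IsSparse d F D m k) (hk : k ≤ 5) {u v : V} (huv : u ≠ v)
    (hF : ¬ F.Adj u v) :
    ∑ G ∈ family d (F ⊔ SimpleGraph.edge u v), (d u * d v - ∑ x, ∑ y, revInd F u v G x y) ≤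
      112 * D ^ 2 / m * (d u * d v) * #(family d (F ⊔ SimpleGraph.edge u v)) := by
  have hm := h.m_pos
  have hD := h.one_le
  have hD0 := h.D_pos
  have h' := h.sup_edge huv hF
  have hle : F ≤ F ⊔ SimpleGraph.edge u v := le_sup_left
  rw [sum_congr rfl fun G hG => by rw [sum_sum_revInd_eq hG hle, sub_sub_cancel]]
  have hF'uv : (F ⊔ SimpleGraph.edge u v).Adj u v := by simp [SimpleGraph.edge_adj, huv]
  have hF'le : ∀ a b, F.Adj a b → (F ⊔ SimpleGraph.edge u v).Adj a b := fun a b h => Or.inl h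
  set F' := F ⊔ SimpleGraph.edge u v
  rcases (family d F').eq_empty_or_nonempty with he | ⟨G₀, hG₀⟩
  · simp [he]
  have hd := nonneg_of_mem hG₀
  have hdu := hd u
  have hdv := hd v
  have hsum := h.sum_le_two_mul (by linarith)
  have hsq := sum_sq_le_of_sum_le hd h.le hD0.le hsum
  set N : ℝ := (#(family d F') : ℝ) with hN
  have hN0 : 0 ≤ N := by positivity
  have huv0 : ∀ G ∈ family d F', adjInd G u v = 0 := fun G hG => adjInd_eq_zero_of_mem hG hF'uv
  have hvu0 : ∀ G ∈ family d F', adjInd G v u = 0 :=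
    fun G hG => adjInd_eq_zero_of_mem hG hF'uv.symm
  have t1 : ∑ G ∈ family d F', ∑ x, adjInd G u x * adjInd G v x ≤
      8 * D * (d u * d v) / m * N := by
    rw [sum_comm]
    calc _ ≤ ∑ x, (4 * (d u * d v) / m ^ 2 * N) * (d x * d x) := by
          refine sum_le_sum fun x _ => ?_
          have hdx := hd x
          by_cases hx : s(v, x) = s(u, x)
          · rw [sum_eq_zero fun G hG => ?_]
            · positivity
            · simp at hx
              grind
          · exact (h'.sum_adjInd_mul_le (by linarith) hx).trans (le_of_eq (by ring))
      _ = (4 * (d u * d v) / m ^ 2 * N) * ∑ x, d x * d x := by rw [mul_sum]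
      _ ≤ (4 * (d u * d v) / m ^ 2 * N) * (D * (2 * m)) := by gcongr
      _ = _ := by field_simp; ring
  have t2 : ∑ G ∈ family d F', ∑ x, ∑ y, adjInd F x y * (adjInd G u x * adjInd G v y) ≤
      72 * D ^ 2 * (d u * d v) / m * N := by
    rw [sum_comm]
    simp_rw [sum_comm (s := family d F'), ← mul_sum]
    have hE : ∀ i, ∑ j, adjInd F i j ≤ 9 * D := fun i => by
      have := h.sum_adjInd_le i
      linarith
    have hc : 0 ≤ 4 * (d u * d v) / m ^ 2 * N * D := by positivity
    refine (sum_adjInd_mul_le_of_le (b := fun x => 4 * (d u * d v) / m ^ 2 * N * D * d x)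
      (m := 4 * (d u * d v) / m ^ 2 * N * D * (2 * m)) hE
      (by linarith) (fun x y => ?_) (fun x => mul_nonneg hc (hd x)) ?_).trans (le_of_eq ?_)
    · have hdx := hd x
      have hdy := hd y
      by_cases hx : s(v, y) = s(u, x)
      · rw [sum_eq_zero fun G hG => ?_]
        · positivity
        · have hxv : x = v := by simp at hx; grind
          rw [hxv, huv0 G hG, zero_mul]
      · refine (h'.sum_adjInd_mul_le (by linarith) hx).trans ?_
        calc _ = 4 * (d u * d v) / m ^ 2 * N * d y * d x := by ring
          _ ≤ _ := by gcongr; exact h.le y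
    · rw [← mul_sum]
      gcongr
    · field_simp; ring
  have t3 : ∑ G ∈ family d F', ∑ x, ∑ y, adjInd G u x * (adjInd G v y * adjInd G x y) ≤
      32 * D ^ 2 * (d u * d v) / m * N := by
    rw [sum_comm]
    simp_rw [sum_comm (s := family d F')]
    calc _ ≤ ∑ x, ∑ y, (8 * (d u * d v) / m ^ 3 * N) * ((d x * d x) * (d y * d y)) := by
          refine sum_le_sum fun x _ => sum_le_sum fun y _ => ?_
          have hdx := hd x
          have hdy := hd y
          by_cases hx : s(v, y) = s(u, x) ∨ s(x, y) = s(u, x) ∨ s(x, y) = s(v, y)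
          · rw [sum_eq_zero fun G hG => ?_]
            · positivity
            · have h1 := huv0 G hG
              have h2 := hvu0 G hG
              have : x = v ∨ y = u ∨ x = u := by simp at hx; grind
              rcases this with rfl | rfl | rfl
              · rw [h1, zero_mul]
              · rw [h2, zero_mul, mul_zero]
              · rw [adjInd_self, zero_mul]
          · push Not at hx
            exact (h'.sum_adjInd_mul_mul_le (by linarith) hx.1 hx.2.1 hx.2.2).trans
              (le_of_eq (by ring))
      _ = (8 * (d u * d v) / m ^ 3 * N) * ((∑ x, d x * d x) * ∑ x, d x * d x) := by
          simp_rw [← mul_sum, sum_mul_sum]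
          rw [mul_sum]
          simp_rw [mul_sum]
      _ ≤ (8 * (d u * d v) / m ^ 3 * N) * ((D * (2 * m)) * (D * (2 * m))) := by
          have : 0 ≤ ∑ x, d x * d x := sum_nonneg fun x _ => mul_self_nonneg _
          gcongr
      _ = _ := by field_simp; ring
  have hDD : 8 * D * (d u * d v) / m * N ≤ 8 * D ^ 2 * (d u * d v) / m * N := by
    gcongr
    nlinarith
  simp only [sum_add_distrib]
  calc _ ≤ _ := add_le_add (add_le_add (t1.trans hDD) t2) t3
    _ = _ := by ring

theorem approx_sum_adjInd (h : IsSparse d F D m k) (hk : k ≤ 5) {u v : V} (huv : u ≠ v)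
    (hF : ¬ F.Adj u v) :
    Approx (220 * D ^ 2 / m) (∑ G ∈ family d F, adjInd G u v)
      (d u * d v / m * #(family d F)) := by
  have hm := h.m_pos
  have hD0 := h.D_pos
  unfold Approx
  rcases (family d F).eq_empty_or_nonempty with he | ⟨G₀, hG₀⟩
  · simp [he]
  have hd := nonneg_of_mem hG₀
  have hdu := hd u
  have hdv := hd v
  have hup := h.sum_adjInd_le_mul_card (by linarith) u v
  have hcard := card_family_eq_add (d := d) huv hF
  rw [sum_family_adjInd huv hF] at hup ⊢
  have hrev := h.sum_revInd_defect_le hk huv hF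
  have hrev' : ∑ G ∈ family d (F ⊔ SimpleGraph.edge u v), ∑ x, ∑ y, revInd F u v G x y ≤
      ∑ G ∈ family d (F ⊔ SimpleGraph.edge u v), d u * d v :=
    sum_le_sum fun G hG => sum_revInd_le hG u v
  have hfwd : |∑ G ∈ family (dropEdge d u v) (F ⊔ SimpleGraph.edge u v),
      (∑ x, ∑ y, fwdInd F u v G x y - m)| ≤
      ∑ G ∈ family (dropEdge d u v) (F ⊔ SimpleGraph.edge u v), 50 * D ^ 2 :=
    (abs_sum_le_sum_abs _ _).trans
      (sum_le_sum fun G hG => h.abs_sum_fwdInd_sub_le (by linarith) hG)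
  simp only [sum_sub_distrib, sum_const, nsmul_eq_mul] at hrev hrev' hfwd
  rw [sum_fwdInd_eq_sum_revInd huv] at hfwd
  set R := ∑ G ∈ family d (F ⊔ SimpleGraph.edge u v), ∑ x, ∑ y, revInd F u v G x y
  set N : ℝ := (#(family d F) : ℝ)
  set N₀ : ℝ := (#(family d (F ⊔ SimpleGraph.edge u v)) : ℝ) with hN₀
  set N₁ : ℝ := (#(family (dropEdge d u v) (F ⊔ SimpleGraph.edge u v)) : ℝ) with hN₁
  have hN₀0 : 0 ≤ N₀ := by positivity
  have hN₁0 : 0 ≤ N₁ := by positivity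
  have hN0 : 0 ≤ N := by linarith
  have hduD := h.le u
  have hdvD := h.le v
  set q := d u * d v with hq
  have hq0 : 0 ≤ q := by positivity
  have hqD : q ≤ D ^ 2 := by rw [hq, sq]; gcongr
  obtain ⟨f1, f2⟩ := abs_le.1 hfwd
  have hup' : N₁ * m ≤ 2 * q * N := by
    calc N₁ * m ≤ 2 * q / m * N * m := by gcongr
      _ = _ := by field_simp
  have hrev2 : N₀ * q - R ≤ 112 * (D ^ 2 / m) * q * N := by
    refine hrev.trans ?_
    have : N₀ ≤ N := by linarith
    calc 112 * D ^ 2 / m * q * N₀ ≤ 112 * D ^ 2 / m * q * N := by gcongr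
      _ = _ := by ring
  have hDN : N₁ * D ^ 2 ≤ 2 * (D ^ 2 / m) * q * N := by
    calc N₁ * D ^ 2 = N₁ * m * (D ^ 2 / m) := by field_simp
      _ ≤ 2 * q * N * (D ^ 2 / m) := by gcongr
      _ = _ := by ring
  have hqN : N₁ * q ≤ N₁ * D ^ 2 := by gcongr
  have hqN0 : 0 ≤ N₁ * q := by positivity
  have main : |N₁ * m - q * N| ≤ 220 * (D ^ 2 / m) * q * N := by
    have hx : 0 ≤ (D ^ 2 / m) * q * N := by positivity
    have e : q * N = N₀ * q + N₁ * q := by rw [hcard]; ring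
    rw [abs_le]
    constructor <;> linarith
  have e1 : N₁ - q / m * N = (N₁ * m - q * N) / m := by field_simp
  rw [e1, abs_div, abs_of_pos hm, div_le_iff₀ hm]
  refine main.trans (le_of_eq ?_)
  field_simp

theorem sq_div_le (h : IsSparse d F D m k) : D ^ 2 / m ≤ 1 / 10000 := by
  rw [div_le_div_iff₀ h.m_pos (by norm_num)]
  linarith [h.sq_le]

theorem approx_sum_adjInd_mul (h : IsSparse d F D m k) (hk : k ≤ 4) {p q r s : V}
    (hpq : p ≠ q) (hFpq : ¬ F.Adj p q) (hrs : r ≠ s) (hFrs : ¬ F.Adj r s)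
    (hne : s(r, s) ≠ s(p, q)) :
    Approx (660 * D ^ 2 / m) (∑ G ∈ family d F, adjInd G p q * adjInd G r s)
      (dropEdge d p q r * dropEdge d p q s / m * (d p * d q / m * #(family d F))) := by
  have hm := h.m_pos
  have hx := h.sq_div_le
  have hx0 : 0 ≤ D ^ 2 / m := by positivity
  have h1 := h.approx_sum_adjInd (by linarith) hpq hFpq
  rw [sum_family_adjInd_mul hpq hFpq _ fun G => adjInd_sup_edge_of_ne G hne]
  rw [sum_family_adjInd hpq hFpq] at h1
  have h2 := (h.dropEdge_sup_edge hpq hFpq).approx_sum_adjInd (by linarith) hrs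
    (by simp [SimpleGraph.edge_adj, hFrs]; simp at hne; grind)
  have e : 220 * D ^ 2 / m = 220 * (D ^ 2 / m) := by ring
  have e' : 660 * D ^ 2 / m = 660 * (D ^ 2 / m) := by ring
  rw [e] at h1 h2
  rw [e']
  have hS := sum_nonneg fun G (_ : G ∈ family (dropEdge d p q) (F ⊔ SimpleGraph.edge p q)) =>
    adjInd_nonneg G r s
  refine (h1.trans h2 (by positivity) hS (by positivity) (by linarith) (by positivity)).mono
    (by positivity) hS ?_
  nlinarith

theorem approx_sum_adjInd_mul_mul (h : IsSparse d F D m k) (hk : k ≤ 3) {p q r s t w : V}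
    (hpq : p ≠ q) (hFpq : ¬ F.Adj p q) (hrs : r ≠ s) (hFrs : ¬ F.Adj r s)
    (htw : t ≠ w) (hFtw : ¬ F.Adj t w)
    (h12 : s(r, s) ≠ s(p, q)) (h13 : s(t, w) ≠ s(p, q)) (h23 : s(t, w) ≠ s(r, s)) :
    Approx (1100 * D ^ 2 / m)
      (∑ G ∈ family d F, adjInd G p q * (adjInd G r s * adjInd G t w))
      (dropEdge (dropEdge d p q) r s t * dropEdge (dropEdge d p q) r s w / m *
        (dropEdge d p q r * dropEdge d p q s / m) * (d p * d q / m * #(family d F))) := by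
  have hm := h.m_pos
  have hx := h.sq_div_le
  have hx0 : 0 ≤ D ^ 2 / m := by positivity
  have h1 := h.approx_sum_adjInd (by linarith) hpq hFpq
  rw [sum_family_adjInd_mul hpq hFpq (fun G => adjInd G r s * adjInd G t w) fun G => by
    simp only [adjInd_sup_edge_of_ne G h12, adjInd_sup_edge_of_ne G h13]]
  rw [sum_family_adjInd hpq hFpq] at h1
  have h2 := (h.dropEdge_sup_edge hpq hFpq).approx_sum_adjInd_mul (by linarith) hrs
    (by simp [SimpleGraph.edge_adj, hFrs]; simp at h12; grind) htw
    (by simp [SimpleGraph.edge_adj, hFtw]; simp at h13; grind) h23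
  rw [← mul_assoc] at h2
  have e : 220 * D ^ 2 / m = 220 * (D ^ 2 / m) := by ring
  have e' : 660 * D ^ 2 / m = 660 * (D ^ 2 / m) := by ring
  have e'' : 1100 * D ^ 2 / m = 1100 * (D ^ 2 / m) := by ring
  rw [e] at h1
  rw [e'] at h2
  rw [e'']
  have hS := sum_nonneg fun G (_ : G ∈ family (dropEdge d p q) (F ⊔ SimpleGraph.edge p q)) =>
    mul_nonneg (adjInd_nonneg G r s) (adjInd_nonneg G t w)
  refine (h1.trans h2 (by positivity) hS (by positivity) (by linarith) (by positivity)).mono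
    (by positivity) hS ?_
  nlinarith

end IsSparse

/-- The ordered edges `xy` of `F` that avoid `u` and `v` and for which neither `xu` nor `yv` is an
edge of `F`. -/
def closable (F : SimpleGraph V) (u v : V) : Finset (V × V) :=
  {p | F.Adj p.1 p.2 ∧ ¬ F.Adj p.1 u ∧ ¬ F.Adj p.2 v ∧ p.1 ≠ u ∧ p.1 ≠ v ∧ p.2 ≠ u ∧ p.2 ≠ v}

/-- The expected proportion of the pairs in `N(u) × N(v)` that cannot be switched back. -/
def revDefect (d : V → ℝ) (F : SimpleGraph V) (m : ℝ) (u v : V) : ℝ :=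
  (∑ x, d x * (d x - 1)) ^ 2 / m ^ 3 + (∑ x, d x * (d x - 1)) / m ^ 2 +
    ∑ p ∈ closable F u v, d p.1 * d p.2 / m ^ 2

namespace IsSparse

variable {d : V → ℝ} {F : SimpleGraph V} {D m k : ℝ}

theorem sum_mul_sub_one_le (hD : ∀ i, d i ≤ D) (hD0 : 0 ≤ D) (hd : ∀ i, 0 ≤ d i)
    (hm : ∑ i, d i ≤ m) : ∑ i, d i * (d i - 1) ≤ D * m := by
  refine (sum_le_sum fun i _ => ?_).trans (sum_sq_le_of_sum_le hd hD hD0 hm)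
  have := hd i
  nlinarith

omit [Fintype V] in
theorem mul_sub_one_le (hD : ∀ i, d i ≤ D) (hd : ∀ i, 0 ≤ d i) (i : V) :
    d i * (d i - 1) ≤ D ^ 2 := by
  have h1 := hd i
  have h2 := hD i
  nlinarith

theorem abs_sum_codegree_sub_le (h : IsSparse d F D m 1) (hm' : ∑ i, d i = m) {u v : V}
    (hF : F.Adj u v) :
    |∑ G ∈ family d F, ∑ x, adjInd G u x * adjInd G v x -
        (∑ x, d x * (d x - 1)) / m ^ 2 * (d u * d v) * #(family d F)| ≤
      664 * (D ^ 4 / m ^ 2) * (d u * d v) * #(family d F) := by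
  have hm := h.m_pos
  have hD := h.one_le
  have hD0 := h.D_pos
  have huv : u ≠ v := hF.ne
  rcases (family d F).eq_empty_or_nonempty with he | ⟨G₀, hG₀⟩
  · simp [he]
  have hd := nonneg_of_mem hG₀
  have hw := mul_sub_one_nonneg_of_mem hG₀
  have hwD := mul_sub_one_le h.le hd
  have hM2 := sum_mul_sub_one_le h.le hD0.le hd hm'.le
  have hdu := hd u
  have hdv := hd v
  set N : ℝ := (#(family d F) : ℝ) with hN
  have hN0 : 0 ≤ N := by positivity
  set c := d u * d v / m ^ 2 * N with hc
  have hc0 : 0 ≤ c := by positivity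
  have key : ∀ x, |∑ G ∈ family d F, adjInd G u x * adjInd G v x - d x * (d x - 1) * c| ≤
      660 * (D ^ 2 / m) * c * (d x * (d x - 1)) +
        (adjInd F u x + adjInd F v x) * (c * D ^ 2) := fun x => by
    have hwx := hw x
    have f1 := adjInd_nonneg F u x
    have f2 := adjInd_nonneg F v x
    by_cases hx : F.Adj u x ∨ F.Adj v x
    · rw [sum_eq_zero fun G hG => ?_]
      · rw [zero_sub, abs_neg, abs_of_nonneg (by positivity)]
        have : 1 ≤ adjInd F u x + adjInd F v x := by
          rcases hx with hx | hx
          · have : adjInd F u x = 1 := if_pos hx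
            linarith
          · have : adjInd F v x = 1 := if_pos hx
            linarith
        calc d x * (d x - 1) * c ≤ 1 * (c * D ^ 2) := by
              rw [one_mul, mul_comm]
              gcongr
              exact hwD x
          _ ≤ (adjInd F u x + adjInd F v x) * (c * D ^ 2) := by gcongr
          _ ≤ _ := le_add_of_nonneg_left (by positivity)
      · rcases hx with hx | hx <;> simp [adjInd_eq_zero_of_mem hG hx]
    · push Not at hx
      have hxv : x ≠ v := fun e => hx.1 (e ▸ hF)
      have hxu : x ≠ u := fun e => hx.2 (e ▸ hF.symm)
      have h1 := h.approx_sum_adjInd_mul (by norm_num) hxu.symm hx.1 hxv.symm hx.2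
        (by simp; grind)
      unfold Approx dropEdge at h1
      simp only [huv.symm, hxv.symm, hxu, if_true, if_false, sub_zero] at h1
      have e : d v * (d x - 1) / m * (d u * d x / m * N) = d x * (d x - 1) * c := by
        rw [hc]; field_simp
      rw [e] at h1
      refine h1.trans ?_
      calc _ = 660 * (D ^ 2 / m) * c * (d x * (d x - 1)) := by ring
        _ ≤ _ := le_add_of_nonneg_right (by positivity)
  rw [sum_comm]
  have e : (∑ x, d x * (d x - 1)) / m ^ 2 * (d u * d v) * N = ∑ x, d x * (d x - 1) * c := by
    rw [← sum_mul, hc]; ring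
  rw [e, ← sum_sub_distrib]
  refine (abs_sum_le_sum_abs _ _).trans ((sum_le_sum fun x _ => key x).trans ?_)
  rw [sum_add_distrib, ← mul_sum, ← sum_mul, sum_add_distrib]
  have s1 := h.sum_adjInd_le u
  have s2 := h.sum_adjInd_le v
  calc _ ≤ 660 * (D ^ 2 / m) * c * (D * m) + (4 * D) * (c * D ^ 2) := by
        gcongr
        linarith
    _ = 664 * c * D ^ 3 := by field_simp; ring
    _ ≤ 664 * c * D ^ 4 := by gcongr; norm_num
    _ = _ := by rw [hc]; field_simp

theorem abs_sum_path_sub_le (h : IsSparse d F D m 1) (hm' : ∑ i, d i = m) {u v : V}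
    (hF : F.Adj u v) :
    |∑ G ∈ family d F, ∑ x, ∑ y, adjInd G u x * (adjInd G v y * adjInd G x y) -
        (∑ x, d x * (d x - 1)) ^ 2 / m ^ 3 * (d u * d v) * #(family d F)| ≤
      1109 * (D ^ 4 / m ^ 2) * (d u * d v) * #(family d F) := by
  have hm := h.m_pos
  have hD := h.one_le
  have hD0 := h.D_pos
  have huv : u ≠ v := hF.ne
  rcases (family d F).eq_empty_or_nonempty with he | ⟨G₀, hG₀⟩
  · simp [he]
  have hd := nonneg_of_mem hG₀
  have hw := mul_sub_one_nonneg_of_mem hG₀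
  have hwD := mul_sub_one_le h.le hd
  have hM2 := sum_mul_sub_one_le h.le hD0.le hd hm'.le
  have hdu := hd u
  have hdv := hd v
  set N : ℝ := (#(family d F) : ℝ) with hN
  have hN0 : 0 ≤ N := by positivity
  set c := d u * d v / m ^ 3 * N with hc
  have hc0 : 0 ≤ c := by positivity
  set w : V → ℝ := fun x => d x * (d x - 1) with hwdef
  have hw' : ∀ x, 0 ≤ w x := hw
  have hwD' : ∀ x, w x ≤ D ^ 2 := hwD
  have hM2' : ∑ x, w x ≤ D * m := hM2
  have hM20 : 0 ≤ ∑ x, w x := sum_nonneg fun x _ => hw' x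
  set g : V → V → ℝ := fun a x => adjInd F a x + (if x = a then 1 else 0) with hg
  have hg0 : ∀ a x, 0 ≤ g a x := fun a x => by
    have := adjInd_nonneg F a x
    simp only [hg]
    split_ifs <;> linarith
  have hgsum : ∀ a, ∑ x, g a x ≤ 3 * D := fun a => by
    have := h.sum_adjInd_le a
    simp only [hg, sum_add_distrib, sum_ite_eq', mem_univ, if_true]
    linarith
  have hg1 : ∀ a x, 1 ≤ g a x ∨ (¬ F.Adj a x ∧ x ≠ a) := fun a x => by
    by_cases h1 : F.Adj a x
    · left
      have : adjInd F a x = 1 := if_pos h1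
      simp only [hg, this]
      split_ifs <;> norm_num
    · by_cases h2 : x = a
      · left
        have := adjInd_nonneg F a x
        simp only [hg, if_pos h2]
        linarith
      · exact Or.inr ⟨h1, h2⟩
  have hbig : ∀ x y, ∑ G ∈ family d F, adjInd G u x * (adjInd G v y * adjInd G x y) = 0 →
      1 ≤ g u x + g v y + g x y →
      |∑ G ∈ family d F, adjInd G u x * (adjInd G v y * adjInd G x y) - w x * w y * c| ≤
      c * (1100 * (D ^ 2 / m) * (w x * w y) + (g u x + g v y + g x y) * (w x * w y)) := by
    intro x y h0 h1
    have hwx := hw' x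
    have hwy := hw' y
    rw [h0, zero_sub, abs_neg, abs_of_nonneg (by positivity)]
    calc w x * w y * c = c * (0 + 1 * (w x * w y)) := by ring
      _ ≤ _ := by gcongr; positivity
  have key : ∀ x y, |∑ G ∈ family d F, adjInd G u x * (adjInd G v y * adjInd G x y) -
      w x * w y * c| ≤
      c * (1100 * (D ^ 2 / m) * (w x * w y) + (g u x + g v y + g x y) * (w x * w y)) :=
      fun x y => by
    have hwx := hw' x
    have hwy := hw' y
    have g1 := hg0 u x
    have g2 := hg0 v y
    have g3 := hg0 x y
    have hz : ∀ {a b : V}, ¬ (¬ F.Adj a b ∧ b ≠ a) → ∀ G ∈ family d F, adjInd G a b = 0 := by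
      intro a b hab G hG
      by_cases hFab : F.Adj a b
      · exact adjInd_eq_zero_of_mem hG hFab
      · have : b = a := by tauto
        rw [this, adjInd_self]
    by_cases b1 : ¬ F.Adj u x ∧ x ≠ u
    swap
    · refine hbig x y (sum_eq_zero fun G hG => by rw [hz b1 G hG, zero_mul]) ?_
      have := (hg1 u x).resolve_right b1
      linarith
    by_cases b2 : ¬ F.Adj v y ∧ y ≠ v
    swap
    · refine hbig x y (sum_eq_zero fun G hG => by rw [hz b2 G hG]; ring) ?_
      have := (hg1 v y).resolve_right b2
      linarith
    by_cases b3 : ¬ F.Adj x y ∧ y ≠ x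
    swap
    · refine hbig x y (sum_eq_zero fun G hG => by rw [hz b3 G hG]; ring) ?_
      have := (hg1 x y).resolve_right b3
      linarith
    have hxv : x ≠ v := fun e => b1.1 (e ▸ hF)
    have hyu : y ≠ u := fun e => b2.1 (e ▸ hF.symm)
    have h1 := h.approx_sum_adjInd_mul_mul (by norm_num) b1.2.symm b1.1 b2.2.symm b2.1
      b3.2.symm b3.1 (by simp; grind) (by simp; grind) (by simp; grind)
    unfold Approx dropEdge at h1
    simp only [huv.symm, hxv, hxv.symm, b1.2, hyu, b3.2, b3.2.symm, b2.2, if_true, if_false,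
      sub_zero] at h1
    have e : (d x - 1) * (d y - 1) / m * (d v * d y / m) * (d u * d x / m * N) =
        w x * w y * c := by
      change _ = d x * (d x - 1) * (d y * (d y - 1)) * c
      rw [hc]; field_simp
    rw [e] at h1
    refine h1.trans ?_
    calc _ = c * (1100 * (D ^ 2 / m) * (w x * w y) + 0) := by ring
      _ ≤ _ := mul_le_mul_of_nonneg_left (add_le_add le_rfl (by positivity)) hc0
  rw [sum_comm]
  simp_rw [sum_comm (s := family d F)]
  have e : (∑ x, d x * (d x - 1)) ^ 2 / m ^ 3 * (d u * d v) * N = ∑ x, ∑ y, w x * w y * c := by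
    simp_rw [← sum_mul]
    rw [← sum_mul_sum, hc]; ring
  rw [e, ← sum_sub_distrib]
  simp only [← sum_sub_distrib]
  have hsum : |∑ x, ∑ y, (∑ G ∈ family d F, adjInd G u x * (adjInd G v y * adjInd G x y) -
      w x * w y * c)| ≤ ∑ x, ∑ y,
      c * (1100 * (D ^ 2 / m) * (w x * w y) + (g u x + g v y + g x y) * (w x * w y)) :=
    (abs_sum_le_sum_abs _ _).trans (sum_le_sum fun x _ =>
      (abs_sum_le_sum_abs _ _).trans (sum_le_sum fun y _ => key x y))
  refine hsum.trans ?_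
  have e2 : ∑ x, ∑ y,
      c * (1100 * (D ^ 2 / m) * (w x * w y) + (g u x + g v y + g x y) * (w x * w y)) =
      c * (1100 * (D ^ 2 / m) * ((∑ x, w x) * ∑ y, w y) + ((∑ x, g u x * w x) * ∑ y, w y +
        (∑ x, w x) * ∑ y, g v y * w y + ∑ x, w x * ∑ y, g x y * w y)) := by
    have hx : ∀ x, ∑ y,
        c * (1100 * (D ^ 2 / m) * (w x * w y) + (g u x + g v y + g x y) * (w x * w y)) =
        c * (1100 * (D ^ 2 / m) * (w x * ∑ y, w y) + (g u x * w x * ∑ y, w y +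
          w x * ∑ y, g v y * w y + w x * ∑ y, g x y * w y)) := fun x => by
      simp only [mul_add, mul_sum, ← sum_add_distrib]
      exact sum_congr rfl fun y _ => by ring
    rw [sum_congr rfl fun x _ => hx x]
    simp only [← mul_sum, sum_add_distrib, ← sum_mul]
  rw [e2]
  have hgw : ∀ a, ∑ x, g a x * w x ≤ 3 * D ^ 3 := fun a => by
    calc ∑ x, g a x * w x ≤ ∑ x, g a x * D ^ 2 := by
          gcongr with x
          · exact hg0 a x
          · exact hwD' x
      _ = (∑ x, g a x) * D ^ 2 := by rw [sum_mul]
      _ ≤ (3 * D) * D ^ 2 := by gcongr; exact hgsum a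
      _ = _ := by ring
  have hgw0 : ∀ a, 0 ≤ ∑ x, g a x * w x := fun a =>
    sum_nonneg fun x _ => mul_nonneg (hg0 a x) (hw' x)
  have hlast : ∑ x, w x * ∑ y, g x y * w y ≤ (D * m) * (3 * D ^ 3) := by
    calc _ ≤ ∑ x, w x * (3 * D ^ 3) := by
          gcongr with x
          · exact hw' x
          · exact hgw x
      _ = (∑ x, w x) * (3 * D ^ 3) := by rw [sum_mul]
      _ ≤ _ := by gcongr
  calc _ ≤ c * (1100 * (D ^ 2 / m) * ((D * m) * (D * m)) + ((3 * D ^ 3) * (D * m) +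
        (D * m) * (3 * D ^ 3) + (D * m) * (3 * D ^ 3))) := by
        have := hgw u
        have := hgw v
        have := hgw0 v
        have := hgw0 u
        gcongr
    _ = 1109 * (D ^ 4 * m) * c := by field_simp; ring
    _ = _ := by rw [hc]; field_simp

theorem sum_closable_le (hD : ∀ i, d i ≤ D) (hD0 : 0 ≤ D) (hd : ∀ i, 0 ≤ d i)
    (hm : ∑ i, d i ≤ m) {E : ℝ} (hE : 0 ≤ E) (hF : ∀ i, ∑ j, adjInd F i j ≤ E) (u v : V) :
    ∑ p ∈ closable F u v, d p.1 * d p.2 ≤ E * (D * m) := by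
  have h1 : ∑ p ∈ closable F u v, d p.1 * d p.2 ≤
      ∑ p : V × V, adjInd F p.1 p.2 * (d p.1 * d p.2) := by
    unfold closable
    rw [sum_filter]
    refine sum_le_sum fun p _ => ?_
    have hp : 0 ≤ d p.1 * d p.2 := mul_nonneg (hd _) (hd _)
    split_ifs with hp'
    · rw [adjInd, if_pos hp'.1, one_mul]
    · exact mul_nonneg (adjInd_nonneg _ _ _) hp
  refine h1.trans ?_
  rw [Fintype.sum_prod_type]
  refine sum_adjInd_mul_le_of_le (b := fun x => D * d x) hF hE (fun x y => ?_)
    (fun x => mul_nonneg hD0 (hd x)) ?_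
  · rw [mul_comm]
    exact mul_le_mul_of_nonneg_right (hD y) (hd x)
  · rw [← mul_sum]
    gcongr

theorem abs_sum_closable_sub_le (h : IsSparse d F D m 0) (hm' : ∑ i, d i = m) {u v : V}
    (huv : u ≠ v) (hF : ¬ F.Adj u v) :
    |∑ G ∈ family d (F ⊔ SimpleGraph.edge u v),
          ∑ x, ∑ y, adjInd F x y * (adjInd G u x * adjInd G v y) -
        (∑ p ∈ closable F u v, d p.1 * d p.2 / m ^ 2) * (d u * d v) *
          #(family d (F ⊔ SimpleGraph.edge u v))| ≤
      1320 * (D ^ 4 / m ^ 2) * (d u * d v) * #(family d (F ⊔ SimpleGraph.edge u v)) := by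
  have hm := h.m_pos
  have hD := h.one_le
  have hD0 := h.D_pos
  have h' := h.sup_edge huv hF
  rw [zero_add] at h'
  have hF'uv : (F ⊔ SimpleGraph.edge u v).Adj u v := by simp [SimpleGraph.edge_adj, huv]
  have hF'le : ∀ a b, F.Adj a b → (F ⊔ SimpleGraph.edge u v).Adj a b := fun a b h => Or.inl h
  have hF'ge : ∀ a b, (F ⊔ SimpleGraph.edge u v).Adj a b → F.Adj a b ∨ (a = u ∧ b = v) ∨
      (a = v ∧ b = u) := fun a b h => by
    simp [SimpleGraph.edge_adj] at h
    tauto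
  set F' := F ⊔ SimpleGraph.edge u v
  rcases (family d F').eq_empty_or_nonempty with he | ⟨G₀, hG₀⟩
  · simp [he]
  have hd := nonneg_of_mem hG₀
  have hdu := hd u
  have hdv := hd v
  set N : ℝ := (#(family d F') : ℝ) with hN
  have hN0 : 0 ≤ N := by positivity
  set c := d u * d v / m ^ 2 * N with hc
  have hc0 : 0 ≤ c := by positivity
  rw [sum_comm]
  simp_rw [sum_comm (s := family d F'), ← mul_sum]
  rw [← Fintype.sum_prod_type' (f := fun x y => adjInd F x y *
    ∑ G ∈ family d F', adjInd G u x * adjInd G v y)]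
  have e1 : ∑ p : V × V, adjInd F p.1 p.2 *
      ∑ G ∈ family d F', adjInd G u p.1 * adjInd G v p.2 =
      ∑ p ∈ closable F u v, ∑ G ∈ family d F', adjInd G u p.1 * adjInd G v p.2 := by
    unfold closable
    rw [sum_filter]
    refine sum_congr rfl fun p _ => ?_
    split_ifs with hp
    · rw [adjInd, if_pos hp.1, one_mul]
    · by_cases hp' : F.Adj p.1 p.2
      · rw [sum_eq_zero, mul_zero]
        intro G hG
        have h1 := @adjInd_eq_zero_of_mem _ _ _ _ _ hG
        by_cases b1 : F.Adj p.1 u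
        · rw [h1 (hF'le _ _ b1.symm), zero_mul]
        by_cases b2 : F.Adj p.2 v
        · rw [h1 (hF'le _ _ b2.symm), mul_zero]
        by_cases b3 : p.1 = u
        · rw [b3, adjInd_self, zero_mul]
        by_cases b4 : p.1 = v
        · rw [b4, h1 hF'uv, zero_mul]
        by_cases b5 : p.2 = u
        · rw [b5, h1 hF'uv.symm, mul_zero]
        by_cases b6 : p.2 = v
        · rw [b6, adjInd_self, mul_zero]
        exact absurd ⟨hp', b1, b2, b3, b4, b5, b6⟩ hp
      · rw [adjInd, if_neg hp', zero_mul]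
  have e2 : (∑ p ∈ closable F u v, d p.1 * d p.2 / m ^ 2) * (d u * d v) * N =
      ∑ p ∈ closable F u v, d p.1 * d p.2 * c := by
    rw [← sum_mul, ← sum_div, hc]; ring
  rw [e1, e2, ← sum_sub_distrib]
  have key : ∀ p ∈ closable F u v,
      |∑ G ∈ family d F', adjInd G u p.1 * adjInd G v p.2 - d p.1 * d p.2 * c| ≤
      660 * (D ^ 2 / m) * c * (d p.1 * d p.2) := by
    intro p hp
    obtain ⟨x, y⟩ := p
    simp only [closable, mem_filter, mem_univ, true_and] at hp ⊢
    obtain ⟨hxy, hxu', hyv', hxu, hxv, hyu, hyv⟩ := hp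
    have hne := hxy.ne
    have h1 := h'.approx_sum_adjInd_mul (by norm_num) hxu.symm
      (fun h => by have := hF'ge _ _ h; have := hxu' ∘ SimpleGraph.Adj.symm; tauto) hyv.symm
      (fun h => by have := hF'ge _ _ h; have := hyv' ∘ SimpleGraph.Adj.symm; tauto)
      (by simp; grind)
    unfold Approx dropEdge at h1
    simp only [huv.symm, hxv.symm, hyu, hne.symm, if_false, sub_zero] at h1
    have e : d v * d y / m * (d u * d x / m * N) = d x * d y * c := by
      rw [hc]; field_simp
    rw [e] at h1
    exact h1.trans (le_of_eq (by ring))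
  refine (abs_sum_le_sum_abs _ _).trans ((sum_le_sum key).trans ?_)
  rw [← mul_sum]
  have hs := sum_closable_le h.le hD0.le hd hm'.le (E := 2 * D) (by positivity) (fun i => by
    have := h.sum_adjInd_le i
    linarith) u v
  calc _ ≤ 660 * (D ^ 2 / m) * c * (2 * D * (D * m)) := by gcongr
    _ = 1320 * D ^ 4 * c := by field_simp; ring
    _ = _ := by rw [hc]; field_simp

theorem abs_sum_revInd_sub_le (h : IsSparse d F D m 0) (hm' : ∑ i, d i = m) {u v : V}
    (huv : u ≠ v) (hF : ¬ F.Adj u v) :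
    |∑ G ∈ family d (F ⊔ SimpleGraph.edge u v), ∑ x, ∑ y, revInd F u v G x y -
        d u * d v * (1 - revDefect d F m u v) * #(family d (F ⊔ SimpleGraph.edge u v))| ≤
      3093 * (D ^ 4 / m ^ 2) * (d u * d v) * #(family d (F ⊔ SimpleGraph.edge u v)) := by
  have h' := h.sup_edge huv hF
  rw [zero_add] at h'
  have hF'uv : (F ⊔ SimpleGraph.edge u v).Adj u v := by simp [SimpleGraph.edge_adj, huv]
  have h1 := abs_le.1 (h'.abs_sum_codegree_sub_le hm' hF'uv)
  have h2 := abs_le.1 (h'.abs_sum_path_sub_le hm' hF'uv)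
  have h3 := abs_le.1 (h.abs_sum_closable_sub_le hm' huv hF)
  rw [sum_congr rfl fun G hG => sum_sum_revInd_eq hG le_sup_left u v]
  simp only [sum_sub_distrib, sum_add_distrib, sum_const, nsmul_eq_mul]
  unfold revDefect
  rw [abs_le]
  constructor <;> linarith

end IsSparse

namespace IsSparse

variable {d : V → ℝ} {F F' : SimpleGraph V} {D m : ℝ}

theorem sum_mul_add_adjInd_le (h0 : ∀ i, 0 ≤ d i) (hD : ∀ i, d i ≤ D) (hm : 0 < m)
    (hs : ∑ i, d i ≤ m) (hF : ∀ i, ∑ j, adjInd F i j ≤ D) (u : V) :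
    ∑ x, d x * (2 * d u * d x / m + adjInd F u x) ≤ 3 * D ^ 2 := by
  have hD0 : 0 ≤ D := (h0 u).trans (hD u)
  have hu := h0 u
  have h1 : ∑ x, d x * (2 * d u * d x / m) ≤ 2 * D ^ 2 := by
    calc ∑ x, d x * (2 * d u * d x / m) = 2 * d u / m * ∑ x, d x * d x := by
          rw [mul_sum]
          exact sum_congr rfl fun x _ => by ring
      _ ≤ 2 * D / m * (D * m) := by
          gcongr
          · exact sum_nonneg fun x _ => mul_nonneg (h0 x) (h0 x)
          · exact hD u
          · exact sum_sq_le_of_sum_le h0 hD hD0 hs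
      _ = _ := by field_simp
  have h2 : ∑ x, d x * adjInd F u x ≤ D ^ 2 := by
    calc ∑ x, d x * adjInd F u x ≤ ∑ x, D * adjInd F u x := by
          gcongr with x
          · exact adjInd_nonneg F u x
          · exact hD x
      _ = D * ∑ x, adjInd F u x := by rw [mul_sum]
      _ ≤ D * D := by gcongr; exact hF u
      _ = _ := by ring
  simp only [mul_add, sum_add_distrib]
  linarith

theorem sum_adjInd_mul_add_le (h : IsSparse d F' D m 1) (hs : ∑ i, d i ≤ m)
    (hF : ∀ i, ∑ j, adjInd F i j ≤ D) {u v : V} (huv : u ≠ v) :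
    ∑ G ∈ family d F', ∑ y, adjInd G u y * (adjInd G v y + adjInd F v y) ≤
      6 * (D ^ 3 / m) * #(family d F') := by
  have hm := h.m_pos
  have hD0 := h.D_pos
  rcases (family d F').eq_empty_or_nonempty with he | ⟨G₀, hG₀⟩
  · simp [he]
  have hd := nonneg_of_mem hG₀
  have hdu := hd u
  have hdv := hd v
  set N : ℝ := (#(family d F') : ℝ) with hN
  have hN0 : 0 ≤ N := by positivity
  have key : ∀ y, ∑ G ∈ family d F', adjInd G u y * (adjInd G v y + adjInd F v y) ≤
      2 * N / m * d u * (d y * (2 * d v * d y / m + adjInd F v y)) := fun y => by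
    have hdy := hd y
    have hf := adjInd_nonneg F v y
    simp only [mul_add, sum_add_distrib, ← sum_mul]
    have h1 : ∑ G ∈ family d F', adjInd G u y * adjInd G v y ≤
        4 * ((d u * d y) * (d v * d y)) / m ^ 2 * N := by
      by_cases hy : s(v, y) = s(u, y)
      · have : v = u ∨ v = y ∧ y = u := by simpa using hy
        rcases this with h' | ⟨h', h''⟩
        · exact absurd h'.symm huv
        · exact absurd (h'.trans h'').symm huv
      · exact h.sum_adjInd_mul_le (by norm_num) hy
    have h2 := mul_le_mul_of_nonneg_right (h.sum_adjInd_le_mul_card (by norm_num) u y) hf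
    refine (add_le_add h1 h2).trans (le_of_eq ?_)
    rw [← hN]
    field_simp
    ring
  rw [sum_comm]
  calc _ ≤ ∑ y, 2 * N / m * d u * (d y * (2 * d v * d y / m + adjInd F v y)) :=
        sum_le_sum fun y _ => key y
    _ = 2 * N / m * d u * ∑ y, d y * (2 * d v * d y / m + adjInd F v y) := by rw [mul_sum]
    _ ≤ 2 * N / m * D * (3 * D ^ 2) := by
        gcongr
        · exact sum_nonneg fun x _ => by
            have := hd x
            have := adjInd_nonneg F v x
            positivity
        · exact h.le u
        · exact sum_mul_add_adjInd_le hd h.le hm hs hF v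
    _ = _ := by ring

theorem sum_adjInd_mul_add_mul_add_le (h : IsSparse d F' D m 1) (hs : ∑ i, d i ≤ m)
    (hF : ∀ i, ∑ j, adjInd F i j ≤ D) {u v : V} (huv : u ≠ v) (hFuv : ¬ F.Adj u v)
    (hF'uv : F'.Adj u v) :
    ∑ G ∈ family d F', ∑ x, ∑ y, adjInd G x y *
        ((adjInd G u x + adjInd F u x) * (adjInd G v y + adjInd F v y)) ≤
      18 * (D ^ 4 / m) * #(family d F') := by
  have hm := h.m_pos
  have hD0 := h.D_pos
  rcases (family d F').eq_empty_or_nonempty with he | ⟨G₀, hG₀⟩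
  · simp [he]
  have hd := nonneg_of_mem hG₀
  have hdu := hd u
  have hdv := hd v
  set N : ℝ := (#(family d F') : ℝ) with hN
  have hN0 : 0 ≤ N := by positivity
  have key : ∀ x y, ∑ G ∈ family d F', adjInd G x y *
      ((adjInd G u x + adjInd F u x) * (adjInd G v y + adjInd F v y)) ≤
      2 * N / m * ((d x * (2 * d u * d x / m + adjInd F u x)) *
        (d y * (2 * d v * d y / m + adjInd F v y))) := fun x y => by
    have hdx := hd x
    have hdy := hd y
    have hf := adjInd_nonneg F v y
    have hf' := adjInd_nonneg F u x
    have hpos : 0 ≤ 2 * N / m * ((d x * (2 * d u * d x / m + adjInd F u x)) *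
        (d y * (2 * d v * d y / m + adjInd F v y))) := by positivity
    have fuv : adjInd F u v = 0 := if_neg hFuv
    by_cases hxu : x = u
    · subst hxu
      simpa only [adjInd_self, add_zero, zero_mul, mul_zero, sum_const_zero] using hpos
    by_cases hyv : y = v
    · subst hyv
      simpa only [adjInd_self, add_zero, zero_mul, mul_zero, sum_const_zero] using hpos
    by_cases hxv : x = v
    · rw [sum_eq_zero fun G hG => ?_]
      · exact hpos
      · rw [hxv, adjInd_eq_zero_of_mem hG hF'uv, fuv]; ring
    by_cases hyu : y = u
    · rw [sum_eq_zero fun G hG => ?_]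
      · exact hpos
      · rw [hyu, adjInd_eq_zero_of_mem hG hF'uv.symm, adjInd_comm F v u, fuv]; ring
    have h1 := h.sum_adjInd_mul_mul_le (by norm_num) (p := x) (q := y) (r := u) (s := x)
      (t := v) (w := y) (by simp; grind) (by simp; grind) (by simp; grind)
    have h2 := mul_le_mul_of_nonneg_right (h.sum_adjInd_mul_le (by norm_num) (p := x) (q := y)
      (r := u) (s := x) (by simp; grind)) hf
    have h3 := mul_le_mul_of_nonneg_right (h.sum_adjInd_mul_le (by norm_num) (p := x) (q := y)
      (r := v) (s := y) (by simp; grind)) hf'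
    have h4 := mul_le_mul_of_nonneg_right (h.sum_adjInd_le_mul_card (by norm_num) x y)
      (mul_nonneg hf hf')
    have e : ∑ G ∈ family d F', adjInd G x y *
        ((adjInd G u x + adjInd F u x) * (adjInd G v y + adjInd F v y)) =
        ∑ G ∈ family d F', adjInd G x y * (adjInd G u x * adjInd G v y) +
        (∑ G ∈ family d F', adjInd G x y * adjInd G u x) * adjInd F v y +
        (∑ G ∈ family d F', adjInd G x y * adjInd G v y) * adjInd F u x +
        (∑ G ∈ family d F', adjInd G x y) * (adjInd F v y * adjInd F u x) := by
      simp only [sum_mul, ← sum_add_distrib]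
      exact sum_congr rfl fun G _ => by ring
    rw [e]
    refine (add_le_add (add_le_add (add_le_add h1 h2) h3) h4).trans (le_of_eq ?_)
    field_simp
    ring
  rw [sum_comm]
  simp_rw [sum_comm (s := family d F')]
  have hA : ∀ w, 0 ≤ ∑ x, d x * (2 * d w * d x / m + adjInd F w x) := fun w =>
    sum_nonneg fun x _ => by
      have := hd x
      have := hd w
      have := adjInd_nonneg F w x
      positivity
  have hA' := sum_mul_add_adjInd_le hd h.le hm hs hF
  calc _ ≤ ∑ x, ∑ y, 2 * N / m * ((d x * (2 * d u * d x / m + adjInd F u x)) *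
        (d y * (2 * d v * d y / m + adjInd F v y))) :=
        sum_le_sum fun x _ => sum_le_sum fun y _ => key x y
    _ = 2 * N / m * ((∑ x, d x * (2 * d u * d x / m + adjInd F u x)) *
        ∑ y, d y * (2 * d v * d y / m + adjInd F v y)) := by
        rw [sum_mul_sum, mul_sum]
        exact sum_congr rfl fun x _ => (mul_sum _ _ _).symm
    _ ≤ 2 * N / m * ((3 * D ^ 2) * (3 * D ^ 2)) := by
        have := hA u
        have := hA v
        gcongr
        · exact hA' u
        · exact hA' v
    _ = _ := by ring

theorem abs_sum_adjInd_mul_sub_one_sub_le {d' : V → ℝ} (h : IsSparse d' F' D m 1)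
    (hd : ∀ i, 0 ≤ d i) (hw : ∀ i, 0 ≤ d i * (d i - 1)) (hD : ∀ i, d i ≤ D)
    (hs : ∑ i, d i ≤ m) {u v : V} (hF' : F'.Adj u v)
    (hd' : ∀ x, x ≠ u → x ≠ v → d' x = d x) (hd'u : d' u = d u - 1) :
    |∑ G ∈ family d' F', ∑ x, adjInd G u x * (d x - 1) -
        (d u - 1) * (∑ x, d x * (d x - 1)) / m * #(family d' F')| ≤
      223 * (D ^ 4 / m) * #(family d' F') := by
  have hm := h.m_pos
  have hD1 := h.one_le
  have hD0 := h.D_pos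
  rcases (family d' F').eq_empty_or_nonempty with he | ⟨G₀, hG₀⟩
  · simp [he]
  have hu0 := nonneg_of_mem hG₀ u
  have huD := h.le u
  rw [hd'u] at hu0 huD
  set N : ℝ := (#(family d' F') : ℝ) with hN
  have hN0 : 0 ≤ N := by positivity
  set c := (d u - 1) / m * N with hc
  have hc0 : 0 ≤ c := by positivity
  set g : V → ℝ := fun x => adjInd F' u x + (if x = u then 1 else 0) with hg
  have hg0 : ∀ x, 0 ≤ g x := fun x => by
    have := adjInd_nonneg F' u x
    simp only [hg]
    split_ifs <;> linarith
  have hgsum : ∑ x, g x ≤ 3 * D := by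
    have := h.sum_adjInd_le u
    simp only [hg, sum_add_distrib, sum_ite_eq', mem_univ, if_true]
    linarith
  have key : ∀ x, |∑ G ∈ family d' F', adjInd G u x * (d x - 1) - d x * (d x - 1) * c| ≤
      220 * (D ^ 2 / m) * c * (d x * (d x - 1)) + g x * (c * D ^ 2) := fun x => by
    have hwx := hw x
    have hgx := hg0 x
    by_cases hx : 1 ≤ g x
    · rw [sum_eq_zero fun G hG => ?_]
      · rw [zero_sub, abs_neg, abs_of_nonneg (by positivity)]
        calc d x * (d x - 1) * c ≤ 1 * (c * D ^ 2) := by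
              rw [one_mul, mul_comm]
              gcongr
              exact mul_sub_one_le hD hd x
          _ ≤ g x * (c * D ^ 2) := by gcongr
          _ ≤ _ := le_add_of_nonneg_left (by positivity)
      · by_cases hFx : F'.Adj u x
        · rw [adjInd_eq_zero_of_mem hG hFx, zero_mul]
        · by_cases hxu : x = u
          · rw [hxu, adjInd_self, zero_mul]
          · simp only [hg, adjInd, hFx, hxu, if_false] at hx
            norm_num at hx
    · have hFx : ¬ F'.Adj u x := fun hFx => hx (by
        simp only [hg, adjInd, hFx, if_true]
        split_ifs <;> norm_num)
      have hxu : x ≠ u := fun e => hx (by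
        have := adjInd_nonneg F' u x
        simp only [hg, if_pos e]
        linarith)
      have hxv : x ≠ v := fun e => hFx (e ▸ hF')
      have h1 := h.approx_sum_adjInd (by norm_num) hxu.symm hFx
      unfold Approx at h1
      rw [hd'u, hd' x hxu hxv] at h1
      have e : ∑ G ∈ family d' F', adjInd G u x * (d x - 1) - d x * (d x - 1) * c =
          (∑ G ∈ family d' F', adjInd G u x - (d u - 1) * d x / m * N) * (d x - 1) := by
        rw [← sum_mul, hc]; ring
      rw [e, abs_mul]
      have e2 : d x * |d x - 1| = d x * (d x - 1) := by
        rw [← abs_of_nonneg hwx, abs_mul, abs_of_nonneg (hd x)]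
      calc _ ≤ 220 * D ^ 2 / m * ((d u - 1) * d x / m * N) * |d x - 1| := by gcongr
        _ = 220 * (D ^ 2 / m) * c * (d x * |d x - 1|) := by rw [hc]; ring
        _ = 220 * (D ^ 2 / m) * c * (d x * (d x - 1)) := by rw [e2]
        _ ≤ _ := le_add_of_nonneg_right (by positivity)
  rw [sum_comm]
  have e : (d u - 1) * (∑ x, d x * (d x - 1)) / m * N = ∑ x, d x * (d x - 1) * c := by
    rw [← sum_mul, hc]; ring
  rw [e, ← sum_sub_distrib]
  refine (abs_sum_le_sum_abs _ _).trans ((sum_le_sum fun x _ => key x).trans ?_)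
  rw [sum_add_distrib, ← mul_sum, ← sum_mul]
  have hM2 := sum_mul_sub_one_le hD hD0.le hd hs
  calc _ ≤ 220 * (D ^ 2 / m) * c * (D * m) + (3 * D) * (c * D ^ 2) := by gcongr
    _ = 223 * D ^ 3 * c := by field_simp; ring
    _ ≤ 223 * D ^ 3 * (D / m * N) := by rw [hc]; gcongr
    _ = _ := by ring

end IsSparse

/-- The approximation to `fwdInd` that keeps only the terms with at most one defect. -/
def fwdApprox (F : SimpleGraph V) (u v : V) (G : SimpleGraph V) (x y : V) : ℝ :=
  adjInd G x y - (if x = u then adjInd G x y else 0) - (if x = v then adjInd G x y else 0) -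
    (if y = u then adjInd G x y else 0) - (if y = v then adjInd G x y else 0) -
    (adjInd G x y * adjInd G u x - if y = u then adjInd G x y * adjInd G u x else 0) -
    adjInd G x y * adjInd F u x -
    (adjInd G x y * adjInd G v y - if x = v then adjInd G x y * adjInd G v y else 0) -
    adjInd G x y * adjInd F v y

theorem abs_fwdInd_sub_fwdApprox_le {d : V → ℝ} {F F' G : SimpleGraph V}
    (hG : G ∈ family d F') (hF : F ≤ F') {u v : V} (hF'uv : F'.Adj u v) (hFuv : ¬ F.Adj u v)
    (x y : V) :
    |fwdInd F u v G x y - fwdApprox F u v G x y| ≤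
      (if x = u then adjInd G x y * (adjInd G v y + adjInd F v y) else 0) +
      (if y = v then adjInd G x y * (adjInd G u x + adjInd F u x) else 0) +
      adjInd G x y * ((adjInd G u x + adjInd F u x) * (adjInd G v y + adjInd F v y)) := by
  have huv : u ≠ v := hF'uv.ne
  have a1 : adjInd G u v = 0 := adjInd_eq_zero_of_mem hG hF'uv
  have a2 : adjInd G v u = 0 := adjInd_eq_zero_of_mem hG hF'uv.symm
  have f1 : adjInd F u v = 0 := if_neg hFuv
  have f2 : adjInd F v u = 0 := if_neg fun h => hFuv h.symm
  have haf : ∀ a b, adjInd G a b * adjInd F a b = 0 := fun a b => by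
    by_cases h : F.Adj a b
    · rw [adjInd_eq_zero_of_mem hG (hF h), zero_mul]
    · rw [adjInd, adjInd, if_neg h, mul_zero]
  have n0 := adjInd_nonneg G x y
  have n1 := adjInd_nonneg G u x
  have n2 := adjInd_nonneg G v y
  have n3 := adjInd_nonneg F u x
  have n4 := adjInd_nonneg F v y
  unfold fwdInd fwdApprox
  by_cases xu : x = u
  · subst xu
    by_cases yx : y = x
    · subst yx
      simp [adjInd_self]
    by_cases yv : y = v
    · subst yv
      simp [a1]
    simp only [huv, yx, yv, adjInd_self, if_true, if_false, true_or]
    rw [abs_le]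
    have := haf x y
    constructor <;> nlinarith [mul_nonneg n0 n2, mul_nonneg n0 n4]
  by_cases xv : x = v
  · subst xv
    by_cases yu : y = u
    · subst yu
      simp [a2]
    by_cases yx : y = x
    · subst yx
      simp [adjInd_self]
    have := haf x y
    simp [a1, f1, xu, yu, yx, this]
  by_cases yu : y = u
  · subst yu
    have h1 := haf x y
    rw [adjInd_comm F x y] at h1
    simp [xu, xv, huv, a2, f2, h1]
  by_cases yv : y = v
  · subst yv
    simp only [xu, xv, yu, adjInd_self, if_true, if_false, false_or, true_or]
    rw [abs_le]
    constructor <;> nlinarith [mul_nonneg n0 n1, mul_nonneg n0 n3]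
  simp only [xu, xv, yu, yv, if_false, false_or]
  have hF01 : (if F.Adj u x ∨ F.Adj v y then 0 else
      adjInd G x y * ((1 - adjInd G u x) * (1 - adjInd G v y))) = adjInd G x y *
      ((1 - (adjInd G u x + adjInd F u x)) * (1 - (adjInd G v y + adjInd F v y))) := by
    by_cases h1 : F.Adj u x
    · rw [if_pos (Or.inl h1), adjInd_eq_zero_of_mem hG (hF h1), adjInd, adjInd, adjInd, adjInd,
        if_pos h1]
      ring
    · by_cases h2 : F.Adj v y
      · rw [if_pos (Or.inr h2), adjInd_eq_zero_of_mem hG (hF h2), adjInd, adjInd, adjInd, adjInd,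
          if_pos h2]
        ring
      · have e1 : adjInd F u x = 0 := if_neg h1
        have e2 : adjInd F v y = 0 := if_neg h2
        rw [if_neg (by tauto), e1, e2, add_zero, add_zero]
  rw [hF01, abs_le]
  have hp : 0 ≤ adjInd G x y * ((adjInd G u x + adjInd F u x) * (adjInd G v y + adjInd F v y)) := by
    positivity
  constructor <;> linarith

theorem sum_sum_fwdApprox {d d' : V → ℝ} {F F' G : SimpleGraph V} (hG : G ∈ family d' F')
    {u v : V} (hF'uv : F'.Adj u v) (hFuv : ¬ F.Adj u v)
    (hd' : ∀ x, x ≠ u → x ≠ v → d' x = d x) :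
    ∑ x, ∑ y, fwdApprox F u v G x y = ∑ x, d' x - 2 * (d' u + d' v) -
      ∑ x, adjInd F u x * d x - ∑ x, adjInd F v x * d x -
      ∑ x, adjInd G u x * (d x - 1) - ∑ x, adjInd G v x * (d x - 1) := by
  have a1 : adjInd G u v = 0 := adjInd_eq_zero_of_mem hG hF'uv
  have f1 : adjInd F u v = 0 := if_neg hFuv
  have a2 : adjInd G v u = 0 := adjInd_eq_zero_of_mem hG hF'uv.symm
  have f2 : adjInd F v u = 0 := if_neg fun h => hFuv h.symm
  have hzero : ∀ {H : SimpleGraph V} {w z : V}, adjInd H w z = 0 → (w = u ∧ z = v ∨ w = v ∧ z = u) →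
      ∀ x, adjInd H w x * d' x = adjInd H w x * d x := by
    intro H w z h0 hwz x
    by_cases hxw : x = w
    · rw [hxw, adjInd_self, zero_mul, zero_mul]
    by_cases hxz : x = z
    · rw [hxz, h0, zero_mul, zero_mul]
    rw [hd' x (by grind) (by grind)]
  have hsq : ∀ a b, adjInd G a b * adjInd G b a = adjInd G a b := fun a b => by
    rw [adjInd_comm G b a]
    rcases adjInd_eq_zero_or_one G a b with h | h <;> rw [h] <;> norm_num
  have r : ∀ x, ∑ y, adjInd G x y = d' x := sum_adjInd_of_mem hG
  have l : ∀ y, ∑ x, adjInd G x y = d' y := sum_adjInd_left_of_mem hG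
  unfold fwdApprox
  simp only [sum_sub_distrib]
  have t1 : ∀ w, ∑ x, ∑ y, (if x = w then adjInd G x y else 0) = d' w := fun w => by
    simp_rw [← r w]
    rw [sum_comm]
    simp
  have t2 : ∀ w, ∑ x, ∑ y, (if y = w then adjInd G x y else 0) = d' w := fun w => by
    simp [l]
  have t3 : ∀ (H : SimpleGraph V) (w : V), ∑ x, ∑ y, adjInd G x y * adjInd H w x =
      ∑ x, adjInd H w x * d' x := fun H w => by
    refine sum_congr rfl fun x _ => ?_
    rw [← sum_mul, r, mul_comm]
  have t4 : ∀ (H : SimpleGraph V) (w : V), ∑ x, ∑ y, adjInd G x y * adjInd H w y =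
      ∑ x, adjInd H w x * d' x := fun H w => by
    rw [sum_comm]
    refine sum_congr rfl fun x _ => ?_
    rw [← sum_mul, l, mul_comm]
  have t5 : ∑ x, ∑ y, (if y = u then adjInd G x y * adjInd G u x else 0) =
      ∑ x, adjInd G u x := by
    refine sum_congr rfl fun x _ => ?_
    rw [sum_ite_eq' univ u, if_pos (mem_univ u), mul_comm, hsq]
  have t6 : ∑ x, ∑ y, (if x = v then adjInd G x y * adjInd G v y else 0) =
      ∑ x, adjInd G v x := by
    rw [sum_comm]
    refine sum_congr rfl fun x _ => ?_
    rw [sum_ite_eq' univ v, if_pos (mem_univ v), adjInd_comm G v x]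
    rcases adjInd_eq_zero_or_one G x v with h | h <;> rw [h] <;> norm_num
  rw [t1, t1, t2, t2, t3, t3, t4, t4, t5, t6, sum_congr rfl fun x _ => r x,
    sum_congr rfl fun x _ => hzero a1 (by tauto) x, sum_congr rfl fun x _ => hzero f1 (by tauto) x,
    sum_congr rfl fun x _ => hzero a2 (by tauto) x, sum_congr rfl fun x _ => hzero f2 (by tauto) x]
  simp only [mul_sub, mul_one, sum_sub_distrib]
  ring

/-- The expected correction, over the graphs from which `uv` has been removed, to the number of
edges that can be traded together with `uv`. -/
def fwdDefect (d : V → ℝ) (F : SimpleGraph V) (m : ℝ) (u v : V) : ℝ :=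
  -2 * (d u + d v) + 2 - ∑ x, adjInd F u x * d x - ∑ x, adjInd F v x * d x -
    (d u + d v - 2) * (∑ x, d x * (d x - 1)) / m

namespace IsSparse

variable {d : V → ℝ} {F : SimpleGraph V} {D m : ℝ}

theorem abs_sum_fwdInd_sub_fwdDefect_le (h : IsSparse d F D m 0) (hm' : ∑ i, d i = m)
    (hd : ∀ i, 0 ≤ d i) (hw : ∀ i, 0 ≤ d i * (d i - 1)) {u v : V} (huv : u ≠ v)
    (hF : ¬ F.Adj u v) :
    |∑ G ∈ family (dropEdge d u v) (F ⊔ SimpleGraph.edge u v), ∑ x, ∑ y, fwdInd F u v G x y -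
        (m + fwdDefect d F m u v) *
          #(family (dropEdge d u v) (F ⊔ SimpleGraph.edge u v))| ≤
      476 * (D ^ 4 / m) * #(family (dropEdge d u v) (F ⊔ SimpleGraph.edge u v)) := by
  have hm := h.m_pos
  have hD1 := h.one_le
  have hD0 := h.D_pos
  have h' := h.dropEdge_sup_edge huv hF
  rw [zero_add] at h'
  have hF'uv : (F ⊔ SimpleGraph.edge u v).Adj u v := by simp [SimpleGraph.edge_adj, huv]
  have hle : F ≤ F ⊔ SimpleGraph.edge u v := le_sup_left
  have hsum := sum_dropEdge d u v
  have hFD : ∀ i, ∑ j, adjInd F i j ≤ D := fun i => by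
    have := h.sum_adjInd_le i
    linarith
  have hd'u : dropEdge d u v u = d u - 1 := by simp [dropEdge, huv]
  have hd'v : dropEdge d u v v = d v - 1 := by simp [dropEdge, huv.symm]
  have hd' : ∀ x, x ≠ u → x ≠ v → dropEdge d u v x = d x := fun x h1 h2 => by
    simp [dropEdge, h1, h2]
  set F' := F ⊔ SimpleGraph.edge u v
  set d' := dropEdge d u v
  have hs' : ∑ i, d' i ≤ m := by linarith
  have e1 := h'.abs_sum_adjInd_mul_sub_one_sub_le hd hw h.le hm'.le hF'uv hd' hd'u
  have e2 := h'.abs_sum_adjInd_mul_sub_one_sub_le hd hw h.le hm'.le hF'uv.symm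
    (fun x h1 h2 => hd' x h2 h1) hd'v
  have o1 := h'.sum_adjInd_mul_add_le hs' hFD huv
  have o2 := h'.sum_adjInd_mul_add_le hs' hFD huv.symm
  have o3 := h'.sum_adjInd_mul_add_mul_add_le hs' hFD huv hF hF'uv
  set N : ℝ := (#(family d' F') : ℝ) with hN
  have hN0 : 0 ≤ N := by positivity
  have hmain : ∑ G ∈ family d' F', ∑ x, ∑ y, fwdApprox F u v G x y =
      (m - 2 - 2 * (d u - 1 + (d v - 1)) - ∑ x, adjInd F u x * d x -
        ∑ x, adjInd F v x * d x) * N - ∑ G ∈ family d' F', ∑ x, adjInd G u x * (d x - 1) -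
        ∑ G ∈ family d' F', ∑ x, adjInd G v x * (d x - 1) := by
    rw [sum_congr rfl fun G hG => sum_sum_fwdApprox hG hF'uv hF hd']
    simp only [sum_sub_distrib, sum_const, nsmul_eq_mul]
    rw [hsum, hm', hd'u, hd'v, ← hN]
    ring
  have herr : |∑ G ∈ family d' F', ∑ x, ∑ y, fwdInd F u v G x y -
      ∑ G ∈ family d' F', ∑ x, ∑ y, fwdApprox F u v G x y| ≤
      6 * (D ^ 3 / m) * N + 6 * (D ^ 3 / m) * N + 18 * (D ^ 4 / m) * N := by
    simp only [← sum_sub_distrib]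
    calc _ ≤ ∑ G ∈ family d' F', ∑ x, ∑ y,
          |fwdInd F u v G x y - fwdApprox F u v G x y| :=
          (abs_sum_le_sum_abs _ _).trans (sum_le_sum fun G _ =>
            (abs_sum_le_sum_abs _ _).trans (sum_le_sum fun x _ => abs_sum_le_sum_abs _ _))
      _ ≤ ∑ G ∈ family d' F', ∑ x, ∑ y,
          ((if x = u then adjInd G x y * (adjInd G v y + adjInd F v y) else 0) +
          (if y = v then adjInd G x y * (adjInd G u x + adjInd F u x) else 0) +
          adjInd G x y * ((adjInd G u x + adjInd F u x) * (adjInd G v y + adjInd F v y))) :=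
          sum_le_sum fun G hG => sum_le_sum fun x _ => sum_le_sum fun y _ =>
            abs_fwdInd_sub_fwdApprox_le hG hle hF'uv hF x y
      _ = ∑ G ∈ family d' F', ∑ y, adjInd G u y * (adjInd G v y + adjInd F v y) +
          ∑ G ∈ family d' F', ∑ y, adjInd G v y * (adjInd G u y + adjInd F u y) +
          ∑ G ∈ family d' F', ∑ x, ∑ y, adjInd G x y *
            ((adjInd G u x + adjInd F u x) * (adjInd G v y + adjInd F v y)) := by
          simp only [sum_add_distrib]
          congr 2
          · refine sum_congr rfl fun G _ => ?_
            rw [sum_comm]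
            exact sum_congr rfl fun y _ => by rw [sum_ite_eq' univ u, if_pos (mem_univ u)]
          · refine sum_congr rfl fun G _ => ?_
            exact sum_congr rfl fun x _ => by
              rw [sum_ite_eq' univ v, if_pos (mem_univ v), adjInd_comm G x v]
      _ ≤ _ := by gcongr
  have h34 : D ^ 3 / m * N ≤ D ^ 4 / m * N := by
    gcongr
    norm_num
  rw [hmain] at herr
  unfold fwdDefect
  set A := ∑ G ∈ family d' F', ∑ x, adjInd G u x * (d x - 1)
  set B := ∑ G ∈ family d' F', ∑ x, adjInd G v x * (d x - 1)
  set M2 := ∑ x, d x * (d x - 1)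
  have e : (d u + d v - 2) * M2 / m = (d u - 1) * M2 / m + (d v - 1) * M2 / m := by ring
  rw [e]
  rw [abs_le] at e1 e2 herr ⊢
  constructor <;> linarith

end IsSparse

theorem exists_rel_error {P s t b r : ℝ} (hr : 0 ≤ r) (hP0 : 0 ≤ P) (hP : P ≤ 2 * s)
    (hb0 : 0 ≤ b) (hb : b ≤ 1 / 100) (ht : |t| ≤ 1 / 100) (ht2 : t ^ 2 ≤ 121 * r)
    (h : |P * (1 + t) - s * (1 - b)| ≤ 4053 * r * s) :
    ∃ θ : ℝ, |θ| ≤ 10000 * r ∧ P = (1 + θ) * s * (1 - b) * (1 - t) := by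
  have hs : 0 ≤ s := by linarith
  rw [abs_le] at ht h
  rcases hs.eq_or_lt with hs0 | hs0
  · refine ⟨0, by simpa using hr, ?_⟩
    rw [← hs0] at hP ⊢
    linarith
  set T := s * (1 - b) * (1 - t) with hT
  have hTs : s / 2 ≤ T := by
    have : 1 / 2 ≤ (1 - b) * (1 - t) := by nlinarith
    calc s / 2 = s * (1 / 2) := by ring
      _ ≤ s * ((1 - b) * (1 - t)) := by gcongr
      _ = T := by rw [hT]; ring
  have hT0 : 0 < T := by linarith
  have hPt : P * t ^ 2 ≤ 2 * s * (121 * r) := by gcongr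
  have hPt0 : 0 ≤ P * t ^ 2 := by positivity
  have hrs : 0 ≤ r * s := by positivity
  have hPT : |P - T| ≤ 5000 * r * s := by
    have h1 : (P * (1 + t) - s * (1 - b)) * (1 - t) ≤ 4053 * r * s * (1 - t) :=
      mul_le_mul_of_nonneg_right h.2 (by linarith)
    have h2 : -(4053 * r * s) * (1 - t) ≤ (P * (1 + t) - s * (1 - b)) * (1 - t) :=
      mul_le_mul_of_nonneg_right h.1 (by linarith)
    have h3 : (P * (1 + t) - s * (1 - b)) * (1 - t) = P - P * t ^ 2 - T := by rw [hT]; ring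
    have h4 : 4053 * r * s * (1 - t) ≤ 4053 * r * s * 2 := by gcongr; linarith
    have h5 : r * s * (1 - t) ≤ r * s * (101 / 100) := by gcongr; linarith
    rw [abs_le]
    constructor <;> linarith
  refine ⟨P / T - 1, ?_, ?_⟩
  · rw [div_sub_one hT0.ne', abs_div, abs_of_pos hT0, div_le_iff₀ hT0]
    refine hPT.trans ?_
    have := mul_le_mul_of_nonneg_left hTs hr
    linarith
  · calc P = P / T * T := by rw [div_mul_cancel₀ _ hT0.ne']
      _ = _ := by rw [hT]; ring

namespace IsSparse

variable {d : V → ℝ} {F : SimpleGraph V} {D m : ℝ}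

theorem revDefect_nonneg (hm : 0 ≤ m) (hd : ∀ i, 0 ≤ d i) (hw : ∀ i, 0 ≤ d i * (d i - 1))
    (u v : V) : 0 ≤ revDefect d F m u v := by
  have h1 : 0 ≤ ∑ x, d x * (d x - 1) := sum_nonneg fun x _ => hw x
  have h2 : 0 ≤ ∑ p ∈ closable F u v, d p.1 * d p.2 / m ^ 2 := sum_nonneg fun p _ => by
    have := hd p.1
    have := hd p.2
    positivity
  unfold revDefect
  positivity

theorem revDefect_le (h : IsSparse d F D m 0) (hm' : ∑ i, d i = m) (hd : ∀ i, 0 ≤ d i)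
    (hw : ∀ i, 0 ≤ d i * (d i - 1)) (u v : V) : revDefect d F m u v ≤ 3 * (D ^ 2 / m) := by
  have hm := h.m_pos
  have hD0 := h.D_pos
  have hD1 := h.one_le
  have h1 : 0 ≤ ∑ x, d x * (d x - 1) := sum_nonneg fun x _ => hw x
  have h2 := sum_mul_sub_one_le h.le hD0.le hd hm'.le
  have h3 := sum_closable_le h.le hD0.le hd hm'.le hD0.le (fun i => by
    have := h.sum_adjInd_le i
    linarith) u v
  unfold revDefect
  rw [← sum_div]
  calc _ ≤ (D * m) ^ 2 / m ^ 3 + (D * m) / m ^ 2 + D * (D * m) / m ^ 2 := by gcongr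
    _ = 2 * (D ^ 2 / m) + D / m := by field_simp; ring
    _ ≤ 2 * (D ^ 2 / m) + D ^ 2 / m := by
        gcongr
        nlinarith
    _ = _ := by ring

theorem sum_adjInd_mul_le_sq (h : IsSparse d F D m 0) (u : V) :
    ∑ x, adjInd F u x * d x ≤ D ^ 2 := by
  have hD0 := h.D_pos
  calc ∑ x, adjInd F u x * d x ≤ ∑ x, adjInd F u x * D := by
        gcongr with x
        · exact adjInd_nonneg F u x
        · exact h.le x
    _ = (∑ x, adjInd F u x) * D := by rw [sum_mul]
    _ ≤ D * D := by
        gcongr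
        have := h.sum_adjInd_le u
        linarith
    _ = _ := by ring

theorem abs_fwdDefect_add_le (h : IsSparse d F D m 0) (hm' : ∑ i, d i = m) (hd : ∀ i, 0 ≤ d i)
    (hw : ∀ i, 0 ≤ d i * (d i - 1)) (u v : V) :
    |fwdDefect d F m u v + d u * d v| ≤ 11 * D ^ 2 := by
  have hm := h.m_pos
  have hD0 := h.D_pos
  have hD1 := h.one_le
  have hM0 : 0 ≤ ∑ x, d x * (d x - 1) := sum_nonneg fun x _ => hw x
  have hM := sum_mul_sub_one_le h.le hD0.le hd hm'.le
  have s0 : ∀ w, 0 ≤ ∑ x, adjInd F w x * d x := fun w =>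
    sum_nonneg fun x _ => mul_nonneg (adjInd_nonneg F w x) (hd x)
  have s1 := h.sum_adjInd_mul_le_sq
  have hu := hd u
  have hv := hd v
  have huD := h.le u
  have hvD := h.le v
  have hq : d u * d v ≤ D ^ 2 := by nlinarith
  have hq0 : 0 ≤ d u * d v := by positivity
  have hr : |(d u + d v - 2) * (∑ x, d x * (d x - 1)) / m| ≤ 2 * D ^ 2 := by
    rw [abs_div, abs_mul, abs_of_nonneg hM0, abs_of_pos hm, div_le_iff₀ hm]
    calc _ ≤ 2 * D * (D * m) := by
          gcongr
          rw [abs_le]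
          constructor <;> linarith
      _ = _ := by ring
  have hDD : D ≤ D ^ 2 := by nlinarith
  have := s0 u
  have := s0 v
  have := s1 u
  have := s1 v
  unfold fwdDefect
  rw [abs_le] at hr ⊢
  constructor <;> linarith

/-- The probability that `uv` is an edge of a uniformly random graph with degree sequence `d`
sharing no edge with `F`. -/
theorem exists_card_div_card_eq (h : IsSparse d F D m 0) (hm' : ∑ i, d i = m) {u v : V}
    (huv : u ≠ v) (hF : ¬ F.Adj u v) (hne : (family d F).Nonempty) :
    ∃ θ : ℝ, |θ| ≤ 10000 * (D ^ 4 / m ^ 2) ∧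
      (#(family (dropEdge d u v) (F ⊔ SimpleGraph.edge u v)) : ℝ) / #(family d F) =
        (1 + θ) * (d u * d v / m) * (1 - revDefect d F m u v) *
          (1 - (fwdDefect d F m u v + d u * d v) / m) := by
  obtain ⟨G₀, hG₀⟩ := hne
  have hd := nonneg_of_mem hG₀
  have hw := mul_sub_one_nonneg_of_mem hG₀
  have hm := h.m_pos
  have hD0 := h.D_pos
  have hu := hd u
  have hv := hd v
  have hq : d u * d v ≤ D ^ 2 := by
    rw [sq]
    gcongr
    · exact h.le u
    · exact h.le v
  have hfwd := h.abs_sum_fwdInd_sub_fwdDefect_le hm' hd hw huv hF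
  have hrev := h.abs_sum_revInd_sub_le hm' huv hF
  rw [sum_fwdInd_eq_sum_revInd huv] at hfwd
  have hcard := card_family_eq_add (d := d) huv hF
  have hup := h.sum_adjInd_le_mul_card (by norm_num) u v
  rw [sum_family_adjInd huv hF] at hup
  have hN : (0 : ℝ) < #(family d F) := by exact_mod_cast card_pos.2 ⟨G₀, hG₀⟩
  have hN0 : (0 : ℝ) ≤ #(family d (F ⊔ SimpleGraph.edge u v)) := by positivity
  have hN1 : (0 : ℝ) ≤ #(family (dropEdge d u v) (F ⊔ SimpleGraph.edge u v)) := by positivity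
  have hb0 := revDefect_nonneg (F := F) hm.le hd hw u v
  have hb := h.revDefect_le hm' hd hw u v
  have hφ := h.abs_fwdDefect_add_le hm' hd hw u v
  have hsq := h.sq_div_le
  set q := d u * d v
  have hq0 : 0 ≤ q := mul_nonneg hu hv
  set N : ℝ := (#(family d F) : ℝ)
  set N₀ : ℝ := (#(family d (F ⊔ SimpleGraph.edge u v)) : ℝ)
  set N₁ : ℝ := (#(family (dropEdge d u v) (F ⊔ SimpleGraph.edge u v)) : ℝ)
  set b := revDefect d F m u v
  set φ := fwdDefect d F m u v
  have ht : |(φ + q) / m| ≤ 11 * (D ^ 2 / m) := by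
    rw [abs_div, abs_of_pos hm, ← mul_div_assoc]
    gcongr
  refine exists_rel_error (by positivity) (by positivity) ?_ hb0 (by linarith) (by linarith) ?_ ?_
  · rw [div_le_iff₀ hN]
    exact hup.trans (le_of_eq (by ring))
  · rw [← sq_abs]
    calc _ ≤ (11 * (D ^ 2 / m)) ^ 2 := by gcongr
      _ = _ := by ring
  · have hqb : q * b * N₁ ≤ 3 * (D ^ 4 / m) * N₁ := by
      calc q * b * N₁ ≤ D ^ 2 * (3 * (D ^ 2 / m)) * N₁ := by gcongr
        _ = _ := by ring
    have hqb0 : 0 ≤ q * b * N₁ := by positivity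
    have h0 : 3093 * (D ^ 4 / m ^ 2) * q * N₀ ≤ 3093 * (D ^ 4 / m ^ 2) * q * N := by
      gcongr
      linarith
    have h1 : D ^ 4 / m * N₁ ≤ D ^ 4 / m * (2 * q / m * N) := by gcongr
    have h2 : D ^ 4 / m * (2 * q / m * N) = 2 * (D ^ 4 / m ^ 2) * q * N := by
      field_simp
    have key : |(m + (φ + q)) * N₁ - q * (1 - b) * N| ≤ 4053 * (D ^ 4 / m ^ 2) * q * N := by
      rw [hcard] at h0 h2 h1 ⊢
      rw [abs_le] at hfwd hrev ⊢
      constructor <;> linarith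
    have e : N₁ / N * (1 + (φ + q) / m) - q / m * (1 - b) =
        ((m + (φ + q)) * N₁ - q * (1 - b) * N) / (m * N) := by
      field_simp
    rw [e, abs_div, abs_of_pos (by positivity : 0 < m * N), div_le_iff₀ (by positivity)]
    refine key.trans (le_of_eq ?_)
    field_simp

end IsSparse

theorem ncard_neighborSet_eq_sum (G : SimpleGraph V) (v : V) :
    ((G.neighborSet v).ncard : ℝ) = ∑ j, adjInd G v j := by
  have e : G.neighborSet v = ((univ.filter fun w => G.Adj v w : Finset V) : Set V) := by
    ext w
    simp
  rw [e, Set.ncard_coe_finset]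
  simp [adjInd]

theorem sum_sum_adjInd_eq (G : SimpleGraph V) :
    ∑ i, ∑ j, adjInd G i j = 2 * (G.edgeSet.ncard : ℝ) := by
  have h := G.sum_degrees_eq_twice_card_edges
  rw [← SimpleGraph.coe_edgeFinset, Set.ncard_coe_finset]
  have h1 : ∀ i, ∑ j, adjInd G i j = (G.degree i : ℝ) := fun i => by
    rw [← ncard_neighborSet_eq_sum, Set.ncard_eq_toFinset_card']
    rfl
  simp_rw [h1]
  exact_mod_cast h

theorem finsum_mem_neighborSet_eq (G : SimpleGraph V) (v : V) (g : V → ℝ) :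
    ∑ᶠ x ∈ G.neighborSet v, g x = ∑ x, adjInd G v x * g x := by
  have e : G.neighborSet v = ((univ.filter fun w => G.Adj v w : Finset V) : Set V) := by
    ext w
    simp
  rw [e, finsum_mem_coe_finset, sum_filter]
  exact sum_congr rfl fun x _ => by simp [adjInd]

theorem card_containing_eq {d : V → ℝ} {H₁ H₂ : SimpleGraph V} (hH : Disjoint H₁ H₂)
    {Q : SimpleGraph V → Prop} (hQ : ∀ G, Q (G ⊔ H₁) ↔ Q G) :
    Nat.card {G : SimpleGraph V //
        ((∀ i, ∑ j, adjInd G i j = d i) ∧ H₁ ≤ G ∧ Disjoint G H₂) ∧ Q G} =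
      #{G ∈ family (fun i => d i - ∑ j, adjInd H₁ i j) (H₁ ⊔ H₂) | Q G} := by
  rw [Nat.card_eq_fintype_card, Fintype.card_subtype]
  have hsup : ∀ {G : SimpleGraph V}, Disjoint G H₁ → ∀ i,
      ∑ j, adjInd (G ⊔ H₁) i j = ∑ j, adjInd G i j + ∑ j, adjInd H₁ i j := fun {G} hG i => by
    rw [← sum_add_distrib]
    refine sum_congr rfl fun j _ => ?_
    have h1 := disjoint_iff_forall_adj.1 hG i j
    by_cases h2 : G.Adj i j <;> by_cases h3 : H₁.Adj i j <;> simp_all [adjInd]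
  refine card_nbij' (fun G => G \ H₁) (fun G => G ⊔ H₁) ?_ ?_ ?_ ?_
  · intro G hG
    simp only [coe_filter, Set.mem_ofPred_eq, mem_univ, true_and] at hG
    obtain ⟨⟨hdeg, hle, hdis⟩, hq⟩ := hG
    have e : G \ H₁ ⊔ H₁ = G := sdiff_sup_cancel hle
    simp only [coe_filter, Set.mem_ofPred_eq, mem_family]
    refine ⟨⟨fun i => ?_, ?_⟩, ?_⟩
    · have := hsup disjoint_sdiff_self_left i (G := G \ H₁)
      rw [e, hdeg] at this
      linarith
    · exact disjoint_sdiff_self_left.sup_right (hdis.mono_left sdiff_le)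
    · rwa [← hQ, e]
  · intro G hG
    simp only [coe_filter, Set.mem_ofPred_eq, mem_family] at hG
    obtain ⟨⟨hdeg, hdis⟩, hq⟩ := hG
    rw [disjoint_sup_right] at hdis
    simp only [coe_filter, Set.mem_ofPred_eq, mem_univ, true_and]
    refine ⟨⟨fun i => ?_, le_sup_right, hdis.2.sup_left hH⟩, (hQ G).2 hq⟩
    rw [hsup hdis.1, hdeg]
    ring
  · intro G hG
    simp only [coe_filter, Set.mem_ofPred_eq, mem_univ, true_and] at hG
    exact sdiff_sup_cancel hG.1.2.1
  · intro G hG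
    simp only [coe_filter, Set.mem_ofPred_eq, mem_family, disjoint_sup_right] at hG
    exact hG.1.2.1.sup_sdiff_cancel_right

theorem card_filter_adj (d : V → ℝ) {F : SimpleGraph V} {u v : V} (huv : u ≠ v)
    (hF : ¬ F.Adj u v) : (#{G ∈ family d F | G.Adj u v} : ℝ) =
      #(family (dropEdge d u v) (F ⊔ SimpleGraph.edge u v)) := by
  rw [← sum_family_adjInd huv hF]
  simp [adjInd]

end Families

open Classical in
theorem card_base_eq {n : ℕ} {d dt : Fin n → ℕ} {H₁ H₂ : SimpleGraph (Fin n)}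
    (hH : Disjoint H₁.edgeSet H₂.edgeSet) (hle : ∀ i, deg H₁ i ≤ d i)
    (hdt : ∀ i, dt i = d i - deg H₁ i) {Q : SimpleGraph (Fin n) → Prop}
    (hQ : ∀ G, Q (G ⊔ H₁) ↔ Q G) :
    Nat.card {G : SimpleGraph (Fin n) //
        ((∀ i, deg G i = d i) ∧ H₁ ≤ G ∧ Disjoint G.edgeSet H₂.edgeSet) ∧ Q G} =
      ((family (fun i => (dt i : ℝ)) (H₁ ⊔ H₂)).filter Q).card := by
  have hdeg : ∀ (G : SimpleGraph (Fin n)) i, (deg G i : ℝ) = ∑ j, adjInd G i j :=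
    ncard_neighborSet_eq_sum
  have hdt' : (fun i => (dt i : ℝ)) = fun i => (d i : ℝ) - ∑ j, adjInd H₁ i j := by
    funext i
    rw [hdt, Nat.cast_sub (hle i), hdeg]
  rw [SimpleGraph.disjoint_edgeSet] at hH
  rw [hdt', ← card_containing_eq (d := fun i => (d i : ℝ)) hH hQ]
  simp only [← hdeg, Nat.cast_inj, SimpleGraph.disjoint_edgeSet]

theorem card_base_eq_card {n : ℕ} {d dt : Fin n → ℕ} {H₁ H₂ : SimpleGraph (Fin n)}
    (hH : Disjoint H₁.edgeSet H₂.edgeSet) (hle : ∀ i, deg H₁ i ≤ d i)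
    (hdt : ∀ i, dt i = d i - deg H₁ i) :
    Nat.card {G : SimpleGraph (Fin n) //
        (∀ i, deg G i = d i) ∧ H₁ ≤ G ∧ Disjoint G.edgeSet H₂.edgeSet} =
      (family (fun i => (dt i : ℝ)) (H₁ ⊔ H₂)).card := by
  simpa using card_base_eq hH hle hdt (Q := fun _ => True) fun _ => Iff.rfl

/-- Improved conditional edge probability with relative error `O(Δ⁵n/M³)`. -/
theorem stmt1 (K c : ℝ) (hK : 1 ≤ K) (hc : 0 < c) :
    ∃ C δ : ℝ, 0 < C ∧ 0 < δ ∧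
      ∀ (n : ℕ) (d : Fin n → ℕ) (M Δ : ℕ),
        M = ∑ i, d i → Δ = Finset.univ.sup d →
        Even M → (Δ : ℝ) ^ 2 ≤ δ * M →
        ∀ H₁ H₂ : SimpleGraph (Fin n),
        Disjoint H₁.edgeSet H₂.edgeSet →
        (∀ i, deg H₁ i ≤ d i) →
        (maxDeg H₂ : ℝ) ≤ K * Δ →
        ∀ dt : Fin n → ℕ, (∀ i, dt i = d i - deg H₁ i) →
        ∀ Mt Mt2 : ℕ, Mt = ∑ i, dt i → Mt2 = ∑ i, dt i * (dt i - 1) →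
        c * M ≤ (Mt : ℝ) →
        ∀ u v : Fin n, u ≠ v → ¬ (H₁ ⊔ H₂).Adj u v →
        ∀ W : Set (Fin n × Fin n),
        W = {p : Fin n × Fin n | (H₁ ⊔ H₂).Adj p.1 p.2 ∧ ¬ (H₁ ⊔ H₂).Adj p.1 u ∧
              ¬ (H₁ ⊔ H₂).Adj p.2 v ∧ p.1 ≠ u ∧ p.1 ≠ v ∧ p.2 ≠ u ∧ p.2 ≠ v} →
        ∀ φ : ℝ,
        φ = -2 * ((dt u : ℝ) + (dt v : ℝ)) + 2
            - (∑ᶠ x ∈ (H₁ ⊔ H₂).neighborSet u, (dt x : ℝ))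
            - (∑ᶠ y ∈ (H₁ ⊔ H₂).neighborSet v, (dt y : ℝ))
            - ((dt u : ℝ) + (dt v : ℝ) - 2) * (Mt2 : ℝ) / (Mt : ℝ)
            + (dt u : ℝ) * (dt v : ℝ) →
        (∃ G : SimpleGraph (Fin n),
          (∀ i, deg G i = d i) ∧ H₁ ≤ G ∧ Disjoint G.edgeSet H₂.edgeSet) →
        ∃ θ : ℝ, |θ| ≤ C * (Δ : ℝ) ^ 5 * n / (M : ℝ) ^ 3 ∧
          prob (fun G => (∀ i, deg G i = d i) ∧ H₁ ≤ G ∧ Disjoint G.edgeSet H₂.edgeSet)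
              (fun G => G.Adj u v)
            = (1 + θ) * ((dt u : ℝ) * (dt v : ℝ) / (Mt : ℝ)) *
                (1 - (Mt2 : ℝ) ^ 2 / (Mt : ℝ) ^ 3 - (Mt2 : ℝ) / (Mt : ℝ) ^ 2
                  - ∑ᶠ p ∈ W, (dt p.1 : ℝ) * (dt p.2 : ℝ) / (Mt : ℝ) ^ 2) *
                (1 - φ / ((M : ℝ) - 2 * nedges H₁)) := by
  refine ⟨10000 * (K + 1) ^ 4 / c ^ 2, c / (10000 * (K + 1) ^ 2), by positivity, by positivity, ?_⟩
  intro n d M Δ hM hΔ _ hδ H₁ H₂ hH hle hmax dt hdt Mt Mt2 hMt hMt2 hcM u v huv hF W hW φ hφ hex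
  have hdΔ : ∀ i, d i ≤ Δ := fun i => hΔ ▸ Finset.le_sup (Finset.mem_univ i)
  have hdtd : ∀ i, dt i ≤ d i := fun i => hdt i ▸ Nat.sub_le _ _
  rcases Nat.eq_zero_or_pos Δ with hΔ0 | hΔ0
  · have hd0 : ∀ i, d i = 0 := fun i => Nat.le_zero.1 (hΔ0 ▸ hdΔ i)
    have hdtu : dt u = 0 := Nat.le_zero.1 (hd0 u ▸ hdtd u)
    refine ⟨0, by simp [hΔ0], ?_⟩
    have hemp : IsEmpty {G : SimpleGraph (Fin n) // ((∀ i, deg G i = d i) ∧ H₁ ≤ G ∧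
        Disjoint G.edgeSet H₂.edgeSet) ∧ G.Adj u v} := by
      refine ⟨fun ⟨G, hG, hadj⟩ => ?_⟩
      have h0 : (G.neighborSet u).ncard = 0 := (hG.1 u).trans (hd0 u)
      rw [Set.ncard_eq_zero] at h0
      exact (h0 ▸ hadj : v ∈ (∅ : Set (Fin n)))
    rw [prob, Nat.card_of_isEmpty, hdtu]
    simp
  set D : ℝ := (K + 1) * Δ with hD
  set e : Fin n → ℝ := fun i => (dt i : ℝ) with he
  set F := H₁ ⊔ H₂ with hFdef
  have hΔ1 : (1 : ℝ) ≤ Δ := by exact_mod_cast hΔ0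
  have hdeg : ∀ (G : SimpleGraph (Fin n)) i, (deg G i : ℝ) = ∑ j, adjInd G i j :=
    ncard_neighborSet_eq_sum
  have hMte : ∑ i, e i = Mt := by rw [hMt]; push_cast; rfl
  have hDsq : 10000 * D ^ 2 ≤ c * M := by
    rw [div_mul_eq_mul_div, le_div_iff₀ (by positivity)] at hδ
    rw [hD]
    linarith
  have hsparse : IsSparse e F D Mt 0 := by
    refine ⟨by rw [hD]; nlinarith, hDsq.trans hcM, fun i => ?_, fun i => ?_, by simp [hMte]⟩
    · have h1 : e i ≤ Δ := by
        exact Nat.cast_le.2 ((hdtd i).trans (hdΔ i))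
      rw [hD]
      nlinarith
    · have h1 : ∑ j, adjInd F i j ≤ ∑ j, adjInd H₁ i j + ∑ j, adjInd H₂ i j := by
        rw [← Finset.sum_add_distrib]
        refine Finset.sum_le_sum fun j _ => ?_
        by_cases h2 : H₁.Adj i j <;> by_cases h3 : H₂.Adj i j <;> simp [adjInd, hFdef, h2, h3]
      have h2 : (deg H₁ i : ℝ) ≤ Δ := by exact_mod_cast (hle i).trans (hdΔ i)
      have h3 : (deg H₂ i : ℝ) ≤ maxDeg H₂ := by
        exact_mod_cast Finset.le_sup (f := deg H₂) (Finset.mem_univ i)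
      rw [hdeg] at h2 h3
      rw [hD]
      linarith
  have hne : (family e F).Nonempty := by
    obtain ⟨G, hG⟩ := hex
    rw [← Finset.card_pos, he, ← card_base_eq_card hH hle hdt, Nat.card_pos_iff]
    exact ⟨⟨G, hG⟩, inferInstance⟩
  have hprob : prob (fun G => (∀ i, deg G i = d i) ∧ H₁ ≤ G ∧ Disjoint G.edgeSet H₂.edgeSet)
      (fun G => G.Adj u v) =
      ((family (dropEdge e u v) (F ⊔ SimpleGraph.edge u v)).card : ℝ) / ((family e F).card : ℝ) := by
    have h1 := card_base_eq hH hle hdt (Q := fun G => G.Adj u v) fun G => by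
      rw [hFdef, SimpleGraph.sup_adj] at hF
      rw [SimpleGraph.sup_adj]
      tauto
    rw [prob, h1, card_base_eq_card hH hle hdt, card_filter_adj _ huv hF]
  obtain ⟨θ, hθ, heq⟩ := hsparse.exists_card_div_card_eq hMte huv hF hne
  have hMt2' : ∑ x, e x * (e x - 1) = Mt2 := by
    rw [hMt2]
    push_cast
    refine Finset.sum_congr rfl fun i _ => ?_
    rcases Nat.eq_zero_or_pos (dt i) with h0 | h0
    · simp [he, h0]
    · simp [he, Nat.cast_sub h0]
  have hrev : 1 - revDefect e F Mt u v = 1 - (Mt2 : ℝ) ^ 2 / (Mt : ℝ) ^ 3 -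
      (Mt2 : ℝ) / (Mt : ℝ) ^ 2 - ∑ᶠ p ∈ W, (dt p.1 : ℝ) * (dt p.2 : ℝ) / (Mt : ℝ) ^ 2 := by
    have hW' : W = (closable F u v : Set (Fin n × Fin n)) := by
      rw [hW]
      ext p
      simp [closable]
    rw [hW', finsum_mem_coe_finset, revDefect, hMt2']
    ring
  have hfwd : fwdDefect e F Mt u v + e u * e v = φ := by
    rw [hφ, finsum_mem_neighborSet_eq, finsum_mem_neighborSet_eq, fwdDefect, hMt2']
  have hedges : (M : ℝ) - 2 * nedges H₁ = Mt := by
    rw [nedges, ← sum_sum_adjInd_eq, hM, ← hMte]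
    push_cast
    rw [← Finset.sum_sub_distrib]
    refine Finset.sum_congr rfl fun i _ => ?_
    rw [← hdeg, ← Nat.cast_sub (hle i), ← hdt]
  refine ⟨θ, ?_, ?_⟩
  · have hcM0 : 0 < c * M := by
      have : 0 < D := by positivity
      exact lt_of_lt_of_le (by positivity) hDsq
    have hM0 : (0 : ℝ) < M := pos_of_mul_pos_right hcM0 hc.le
    have hMn : (M : ℝ) ≤ n * Δ := by
      have : M ≤ n * Δ := by
        rw [hM]
        simpa using Finset.sum_le_card_nsmul Finset.univ d Δ fun i _ => hdΔ i
      exact_mod_cast this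
    calc |θ| ≤ 10000 * (D ^ 4 / (Mt : ℝ) ^ 2) := hθ
      _ ≤ 10000 * (D ^ 4 / (c * M) ^ 2) := by gcongr
      _ = 10000 * (K + 1) ^ 4 / c ^ 2 * Δ ^ 4 * M / (M : ℝ) ^ 3 := by
        rw [hD]
        field_simp
      _ ≤ 10000 * (K + 1) ^ 4 / c ^ 2 * Δ ^ 4 * (n * Δ) / (M : ℝ) ^ 3 := by gcongr
      _ = _ := by ring
  · rw [hprob, heq, hrev, hfwd, hedges]
end
end
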